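/- arXiv:0803.3521 — 4 statements merged into one kernel-verified Lean document; each statement's English description precedes it below -/
import Mathlib

section
/- There exists δ₀ > 0 such that for every δ ∈ (0, δ₀] there exist real numbers ε, ε̃ with 0 < ε ≤ √δ and 0 < ε̃ ≤ √δ, and a nonnegative function Φ ∈ Z, such that for all z ≥ 0 one has Φ(z) = ε·∫_z^∞ ξ·a_δ(ξ)·(ψ(z; ε, ε̃, δ)/ψ(ξ; ε, ε̃, δ))·(Φ*Φ)(ξ) dξ, together with the compatibility conditions ∫₀^∞ z·Φ(z) dz = 1 and ε·∫₀^∞ Φ(z) dz = ε̃. (Such Φ is an exponentially decaying stationary self-similar profile of the LSW model with encounters.) -/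
/-!
With `F = 1/a_δ` one has `b_δ = 1 + F'`, so `ψ(z) = N a_δ(z) exp(-∫₀^z (1 - ε - ε̃ y) a_δ)` and the
kernel of the integral equation is `ξ a_δ(z) exp(∫_z^ξ (1 - ε - ε̃ y) a_δ)`: no singular coefficient
is left. As `δ → 0`, `a_δ` has a peak of height of order `1/δ` and width of order `√δ` at `z = 1/2`, and
it stays bounded at a distance from that point. Hence `K = exp(½ ∫₀¹ a_δ)` is at least `exp(1/(4√δ))`, larger than any power of `1/δ`.

Write `Φ = Θ/m₁` with `m₁` the first moment of `Θ`, `m₀` its zeroth moment, and take `ε = (s/K) m₁`,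
`ε̃ = (s/K) m₀`. Then both compatibility conditions hold automatically, and with `Θ(0) = a_δ(0)` as
normalisation the integral equation becomes a fixed-point problem for the pair `(Θ, s)`:
`Θ = a_δ T / T(0)`, `s = K/T(0)`, where
`T(z) = ∫_z^∞ ξ exp(∫_z^ξ (1 - ε - ε̃ y) a_δ) (Θ * Θ)(ξ) dξ`.

On `[0, 1]`, `T/T(0)` is the homogeneous solution minus a term divided by `T(0)` (`Ctx.U_eq`).
Since the convolution square of `Θ` is bounded below by a power of `δ` beyond the peak, `T(0)` is at
least `K²` times a power of `δ` (`Ctx.T0_low`), so `1/T(0)` is exponentially small. The parameters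
`ε`, `ε̃` carry a factor `1/K` as well. Therefore the map depends on `(Θ, s)` only through
exponentially small terms: in a weighted supremum norm it preserves an explicit closed set of pairs
(`Ctx.S_adm`) and is a contraction there (`Ctx.S_near`). Its fixed point (`Ctx.exists_fixed`) is the
profile; the weight yields the exponential decay. The estimates are carried out for an abstract
coefficient (`Ctx`), and `exists_ctx` shows that `a_δ` qualifies for small `δ`.
-/

open MeasureTheory Set Filter

/-- λ_LSW := 3 (1/2)^(2/3) -/
noncomputable def lamLSW : ℝ := 3 * (1/2 : ℝ) ^ ((2:ℝ)/3)

/-- a_δ(z) := 1/(1 + z − (λ_LSW − δ) z^(1/3)) -/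
noncomputable def aF (δ z : ℝ) : ℝ := 1 / (1 + z - (lamLSW - δ) * z ^ ((1:ℝ)/3))

/-- b_δ(z) := 2 − (1/3)(λ_LSW − δ) z^(−2/3) -/
noncomputable def bF (δ z : ℝ) : ℝ := 2 - (1/3) * (lamLSW - δ) * z ^ (-(2:ℝ)/3)

/-- ‖Φ‖_sup := sup_{0≤z≤1} |Φ(z)| -/
noncomputable def normSup (Φ : ℝ → ℝ) : ℝ := sSup ((fun z => |Φ z|) '' Icc (0:ℝ) 1)

/-- ‖Φ‖_tail := sup_{z≥1} |Φ(z)| e^{β₁ z} z^{β₂} -/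
noncomputable def normTail (β₁ β₂ : ℝ) (Φ : ℝ → ℝ) : ℝ :=
  sSup ((fun z => |Φ z| * Real.exp (β₁ * z) * z ^ β₂) '' Ici (1:ℝ))

/-- ‖Φ‖_Z := ‖Φ‖_sup + ‖Φ‖_tail -/
noncomputable def normZ (β₁ β₂ : ℝ) (Φ : ℝ → ℝ) : ℝ := normSup Φ + normTail β₁ β₂ Φ

/-- membership in the space Z: measurable with finite norm -/
def memZ (β₁ β₂ : ℝ) (Φ : ℝ → ℝ) : Prop :=
  Measurable Φ ∧ BddAbove ((fun z => |Φ z|) '' Icc (0:ℝ) 1) ∧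
    BddAbove ((fun z => |Φ z| * Real.exp (β₁ * z) * z ^ β₂) '' Ici (1:ℝ))

/-- (Φ₁ * Φ₂)(z) := (1/2) ∫₀^z Φ₁(z−y) Φ₂(y) dy -/
noncomputable def conv (Φ₁ Φ₂ : ℝ → ℝ) (z : ℝ) : ℝ :=
  (1/2) * ∫ y in (0:ℝ)..z, Φ₁ (z - y) * Φ₂ y

/-- unnormalized solution of the homogeneous ODE -/
noncomputable def psi0 (δ ε εt z : ℝ) : ℝ :=
  Real.exp (-∫ y in (0:ℝ)..z, aF δ y * (bF δ y - εt * y - ε))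

/-- ψ(z; ε, ε̃, δ), normalized so that ∫₀¹ z ψ dz = 1 -/
noncomputable def psi (δ ε εt z : ℝ) : ℝ :=
  psi0 δ ε εt z / ∫ t in (0:ℝ)..1, t * psi0 δ ε εt t

/-- the smooth LSW self-similar profile -/
noncomputable def PhiLSW (z : ℝ) : ℝ :=
  if z ≤ 1/2 then
    Real.exp (-∫ y in (0:ℝ)..z, aF 0 y * bF 0 y) /
      ∫ t in (0:ℝ)..(1/2 : ℝ), t * Real.exp (-∫ y in (0:ℝ)..t, aF 0 y * bF 0 y)
  else 0

/-- ρ_δ(ξ) := ξ a_δ(ξ) exp(−∫_ξ^1 a_δ b_δ) -/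
noncomputable def rhoF (δ ξ : ℝ) : ℝ :=
  ξ * aF δ ξ * Real.exp (-∫ y in ξ..(1:ℝ), aF δ y * bF δ y)

/-- R_δ[h] := ∫₀¹ ρ_δ(ξ) h(ξ) dξ -/
noncomputable def Rdel (δ : ℝ) (h : ℝ → ℝ) : ℝ := ∫ ξ in (0:ℝ)..1, rhoF δ ξ * h ξ

/-- R₀[h] := ∫_{1/2}^1 ξ a₀(ξ) h(ξ) exp(−∫_ξ^1 a₀ b₀) dξ -/
noncomputable def Rzero (h : ℝ → ℝ) : ℝ :=
  ∫ ξ in (1/2 : ℝ)..1, ξ * aF 0 ξ * h ξ * Real.exp (-∫ y in ξ..(1:ℝ), aF 0 y * bF 0 y)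

/-- γ₁(z) = z, γ₂(z) = 1 -/
noncomputable def gamF (i : ℕ) (z : ℝ) : ℝ := if i = 1 then z else 1

/-- Γ_i(ξ; ε, ε̃, δ) -/
noncomputable def Gam (i : ℕ) (δ ε εt ξ : ℝ) : ℝ :=
  ∫ z in (0:ℝ)..ξ, gamF i z * Real.exp (∫ y in z..ξ, aF δ y * (bF δ y - εt * y - ε))

/-- Γ̂_i(ξ; δ) := Γ_i(ξ; 0, 0, δ) -/
noncomputable def GamHat (i : ℕ) (δ ξ : ℝ) : ℝ := Gam i δ 0 0 ξ

/-- K_i^δ := Γ̂_i(1; δ) -/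
noncomputable def Kc (i : ℕ) (δ : ℝ) : ℝ := GamHat i δ 1

/-- Ĝ_i[h; δ] := ∫₀¹ ξ a_δ(ξ) h(ξ) Γ̂_i(ξ; δ) dξ -/
noncomputable def Ghat (i : ℕ) (δ : ℝ) (h : ℝ → ℝ) : ℝ :=
  ∫ ξ in (0:ℝ)..1, ξ * aF δ ξ * h ξ * GamHat i δ ξ

/-- G_i[h; ε, ε̃, δ] := ∫₀^∞ ξ a_δ(ξ) h(ξ) Γ_i(ξ; ε, ε̃, δ) dξ -/
noncomputable def Gfull (i : ℕ) (δ ε εt : ℝ) (h : ℝ → ℝ) : ℝ :=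
  ∫ ξ in Ioi (0:ℝ), ξ * aF δ ξ * h ξ * Gam i δ ε εt ξ

namespace LSWE

/-! ### Elementary estimates -/

lemma abs_integral_Ioi_le {f : ℝ → ℝ} {B z : ℝ}
    (h : ∀ ξ, z < ξ → |f ξ| ≤ B * Real.exp (-(ξ - z))) : |∫ ξ in Ioi z, f ξ| ≤ B := by
  have h1 : ∫ ξ in Ioi z, (B * Real.exp z) * Real.exp (-ξ) = B := by
    rw [integral_const_mul, integral_exp_neg_Ioi, mul_assoc, ← Real.exp_add]; simp
  have h2 := norm_integral_le_of_norm_le (μ := volume.restrict (Ioi z)) (f := f)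
    (g := fun ξ => (B * Real.exp z) * Real.exp (-ξ))
    ((integrableOn_exp_neg_Ioi z).const_mul _) (by
      refine (ae_restrict_iff' measurableSet_Ioi).2 (Eventually.of_forall fun ξ hξ => ?_)
      refine (h ξ hξ).trans (le_of_eq ?_)
      rw [mul_assoc, ← Real.exp_add]; congr 2; ring)
  rwa [h1] at h2

lemma integrableOn_Ioi_of_le {f : ℝ → ℝ} {B z : ℝ} (hf : Continuous f)
    (h : ∀ ξ, z < ξ → |f ξ| ≤ B * Real.exp (-(ξ - z))) : IntegrableOn f (Ioi z) := by
  refine Integrable.mono' (g := fun ξ => (B * Real.exp z) * Real.exp (-ξ))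
    ((integrableOn_exp_neg_Ioi z).const_mul _) hf.aestronglyMeasurable ?_
  refine (ae_restrict_iff' measurableSet_Ioi).2 (Eventually.of_forall fun ξ hξ => ?_)
  refine (h ξ hξ).trans (le_of_eq ?_)
  rw [mul_assoc, ← Real.exp_add]; congr 2; ring

lemma exp_sub_exp_le {x y m : ℝ} (hx : x ≤ m) (hy : y ≤ m) :
    |Real.exp x - Real.exp y| ≤ Real.exp m * |x - y| := by
  have key : ∀ u v : ℝ, u ≤ v → v ≤ m → Real.exp v - Real.exp u ≤ Real.exp m * (v - u) := by
    intro u v huv hv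
    have h1 := Real.add_one_le_exp (u - v)
    have h2 : Real.exp u = Real.exp v * Real.exp (u - v) := by rw [← Real.exp_add]; congr 1; ring
    have h3 := Real.exp_le_exp.2 hv
    have h4 := Real.exp_pos v
    rw [h2]
    nlinarith
  rcases le_total x y with h | h
  · rw [abs_sub_comm, abs_sub_comm x y, abs_of_nonneg (sub_nonneg.2 (Real.exp_le_exp.2 h)),
      abs_of_nonneg (sub_nonneg.2 h)]
    exact key _ _ h hy
  · rw [abs_of_nonneg (sub_nonneg.2 (Real.exp_le_exp.2 h)), abs_of_nonneg (sub_nonneg.2 h)]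
    exact key _ _ h hx

lemma integral_inv_sq_le {ξ : ℝ} (hξ : 0 ≤ ξ) : ∫ y in (0:ℝ)..ξ, 1 / (1 + |y|) ^ 2 ≤ 1 := by
  have h : ∫ y in (0:ℝ)..ξ, 1 / (1 + |y|) ^ 2 = ∫ y in (0:ℝ)..ξ, 1 / (1 + y) ^ 2 := by
    refine intervalIntegral.integral_congr fun y hy => ?_
    rw [uIcc_of_le hξ] at hy
    simp only [abs_of_nonneg hy.1]
  rw [h, intervalIntegral.integral_eq_sub_of_hasDerivAt (f := fun y => -(1 + y)⁻¹)]
  · have : 0 ≤ (1 + ξ)⁻¹ := by positivity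
    simp; linarith
  · intro y hy
    rw [uIcc_of_le hξ] at hy
    have hy0 : (1 + y) ≠ 0 := by linarith [hy.1]
    have := (((hasDerivAt_id y).const_add 1).inv hy0).neg
    convert this using 1
    · rfl
    · simp only [id]; ring
  · refine ContinuousOn.intervalIntegrable ?_
    intro y hy
    rw [uIcc_of_le hξ] at hy
    have hy0 : (1 + y) ≠ 0 := by linarith [hy.1]
    exact (ContinuousAt.div (by fun_prop) (by fun_prop) (by positivity)).continuousWithinAt

/-- The weight `e^{-βz}/(1+z)²` carried by the profile; `|z|` replaces `z` only to make it
continuous on all of `ℝ`. -/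
noncomputable def W (β z : ℝ) : ℝ := Real.exp (-β * z) / (1 + |z|) ^ 2

/-- The weight `e^{-βz}/(1+z)` carried by the profile multiplied by `1/a`; as `1/a` grows linearly,
it is weaker than `W` by one power of `1 + z`. -/
noncomputable def om (β z : ℝ) : ℝ := Real.exp (-β * z) / (1 + |z|)

lemma W_cont (β : ℝ) : Continuous (W β) := by
  unfold W
  refine Continuous.div (by fun_prop) (by fun_prop) fun z => ?_
  have := abs_nonneg z
  positivity

lemma om_cont (β : ℝ) : Continuous (om β) := by
  unfold om
  refine Continuous.div (by fun_prop) (by fun_prop) fun z => ?_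
  have := abs_nonneg z
  positivity

lemma W_pos (β z : ℝ) : 0 < W β z := by
  have := abs_nonneg z
  unfold W; positivity

lemma om_pos (β z : ℝ) : 0 < om β z := by
  have := abs_nonneg z
  unfold om; positivity

lemma om_eq (β : ℝ) {z : ℝ} (hz : 0 ≤ z) : om β z = (1 + z) * W β z := by
  unfold om W
  rw [abs_of_nonneg hz]
  field_simp

lemma W_le_exp (β : ℝ) {z : ℝ} (hz : 0 ≤ z) : W β z ≤ Real.exp (-β * z) := by
  unfold W
  rw [abs_of_nonneg hz]
  refine div_le_self (Real.exp_pos _).le ?_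
  nlinarith

lemma mul_W_le_exp (β : ℝ) {z : ℝ} (hz : 0 ≤ z) : z * W β z ≤ Real.exp (-β * z) := by
  unfold W
  rw [abs_of_nonneg hz, mul_div_assoc', div_le_iff₀ (by positivity)]
  have := Real.exp_pos (-β * z)
  nlinarith [mul_nonneg this.le hz, mul_nonneg (mul_nonneg this.le hz) hz]

/-- Integrability of `1/(1+z)²` makes the weight `W` stable under convolution. -/
lemma W_conv (β : ℝ) {ξ : ℝ} (hξ : 0 ≤ ξ) :
    ∫ y in (0:ℝ)..ξ, W β (ξ - y) * W β y ≤ 4 * W β ξ := by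
  have hc : Continuous fun y : ℝ => 1 / (1 + |y|) ^ 2 := by
    refine Continuous.div (by fun_prop) (by fun_prop) fun z => ?_
    have := abs_nonneg z
    positivity
  have hc2 : Continuous fun y : ℝ => 1 / (1 + |ξ - y|) ^ 2 :=
    hc.comp (continuous_const.sub continuous_id)
  have h1 : ∫ y in (0:ℝ)..ξ, W β (ξ - y) * W β y ≤
      ∫ y in (0:ℝ)..ξ, (Real.exp (-β * ξ) * 2 / (1 + ξ) ^ 2) *
        (1 / (1 + |y|) ^ 2 + 1 / (1 + |ξ - y|) ^ 2) := by
    refine intervalIntegral.integral_mono_on hξ ?_ ?_ ?_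
    · exact (((W_cont β).comp (by fun_prop)).mul (W_cont β)).intervalIntegrable _ _
    · exact (continuous_const.mul (hc.add hc2)).intervalIntegrable _ _
    · intro y hy
      have hy1 : 0 ≤ ξ - y := by linarith [hy.2]
      have hy0 := hy.1
      unfold W
      rw [abs_of_nonneg hy1, abs_of_nonneg hy0]
      have he : Real.exp (-β * (ξ - y)) * Real.exp (-β * y) = Real.exp (-β * ξ) := by
        rw [← Real.exp_add]; congr 1; ring
      rw [div_mul_div_comm, he]
      -- With `u = 1 + y`, `v = 1 + ξ - y`: `(u v)⁻² (u + v - 1)² ≤ 2 (u⁻² + v⁻²)`.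
      obtain ⟨u, hu⟩ : ∃ u, u = 1 + y := ⟨_, rfl⟩
      obtain ⟨v, hv⟩ : ∃ v, v = 1 + (ξ - y) := ⟨_, rfl⟩
      have hu1 : 1 ≤ u := by linarith
      have hv1 : 1 ≤ v := by linarith
      have hx : 1 + ξ = u + v - 1 := by linarith
      rw [← hu, ← hv, hx, mul_div_assoc, mul_assoc, div_eq_mul_one_div]
      refine mul_le_mul_of_nonneg_left ?_ (Real.exp_pos _).le
      have h3 : 2 / (u + v - 1) ^ 2 * (1 / u ^ 2 + 1 / v ^ 2) =
          2 * (u ^ 2 + v ^ 2) / ((u + v - 1) ^ 2 * (v ^ 2 * u ^ 2)) := by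
        have : u + v - 1 ≠ 0 := by linarith
        field_simp
        ring
      have huv : 0 < u + v - 1 := by linarith
      rw [h3, div_le_div_iff₀ (by positivity) (by positivity)]
      have h4 : (u + v - 1) ^ 2 ≤ 2 * (u ^ 2 + v ^ 2) := by nlinarith [sq_nonneg (u - v)]
      have h5 : 0 ≤ v ^ 2 * u ^ 2 := by positivity
      nlinarith [mul_le_mul_of_nonneg_right h4 h5]
  refine h1.trans ?_
  rw [intervalIntegral.integral_const_mul, intervalIntegral.integral_add (hc.intervalIntegrable _ _)
    (hc2.intervalIntegrable _ _),
    intervalIntegral.integral_comp_sub_left (fun y => 1 / (1 + |y|) ^ 2)]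
  have h2 := integral_inv_sq_le hξ
  simp only [sub_self, sub_zero]
  have h3 : 0 ≤ Real.exp (-β * ξ) * 2 / (1 + ξ) ^ 2 := by positivity
  calc _ ≤ Real.exp (-β * ξ) * 2 / (1 + ξ) ^ 2 * 2 :=
        mul_le_mul_of_nonneg_left (by linarith) h3
    _ = _ := by unfold W; rw [abs_of_nonneg hξ]; ring

/-! ### The fixed-point map and its estimates -/

/-- A coefficient `a` with the properties of `a_δ`, `δ` small, that the fixed-point argument uses.
The three scales are: `c`, a bound for `a` away from its peak at `1/2`; `P`, a bound for everything
that grows polynomially in `1/δ`; and `K`, the square root of `exp (∫₀¹ a)`, which dominates every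
power of `P` that occurs. The decay rate `β` exceeds `c` so that the weight beats the growth of
`exp (∫ a)` beyond `3/4`. -/
structure Ctx where
  a : ℝ → ℝ
  β : ℝ
  c : ℝ
  P : ℝ
  K : ℝ
  cont : Continuous a
  pos : ∀ z, 0 < a z
  aP : ∀ z, 0 ≤ z → a z * (1 + z) ≤ P
  ac : ∀ z, 0 ≤ z → (z ≤ 7/16 ∨ 3/4 ≤ z) → a z ≤ c
  ah : ∀ z, 0 ≤ z → z ≤ 1 → 1/2 ≤ a z
  hc : 1 ≤ c
  hβ : c + 2 ≤ β
  hP : 4096 ≤ P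
  hPβ : 2 * Real.exp β ≤ P
  hK : 0 < K
  hKA : K ^ 2 = Real.exp (∫ y in (0:ℝ)..1, a y)
  big : P ^ 30 ≤ K

/-- Admissible unknowns `(g, s)`: the profile is `a · om · g` up to normalisation and the coupling
constants are `s / K` times its moments. The lower bound on `[5/16, 7/16]` keeps the convolution
square of the profile away from zero at some points beyond `3/4`. -/
structure Adm (C : Ctx) (x : (ℝ → ℝ) × ℝ) : Prop where
  cont : Continuous x.1
  nn : ∀ z, 0 ≤ x.1 z
  le : ∀ z, x.1 z ≤ C.P
  low : ∀ z, 5/16 ≤ z → z ≤ 7/16 → 1 / C.P ≤ x.1 z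
  s0 : 0 ≤ x.2
  s1 : x.2 ≤ 1

/-- `x` and `y` are at distance at most `d`, for the supremum norm on the first component. -/
structure Near (x y : (ℝ → ℝ) × ℝ) (d : ℝ) : Prop where
  d0 : 0 ≤ d
  g : ∀ z, |x.1 z - y.1 z| ≤ d
  s : |x.2 - y.2| ≤ d

namespace Ctx
variable (C : Ctx) (x y : (ℝ → ℝ) × ℝ)

/-- The profile of `x = (g, s)`, before normalisation of its first moment. -/
noncomputable def Th (z : ℝ) : ℝ := C.a z * (om C.β z * x.1 z)

/-- The zeroth moment of the profile. -/
noncomputable def m0 : ℝ := ∫ z in Ioi (0:ℝ), C.Th x z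

/-- The first moment of the profile. -/
noncomputable def m1 : ℝ := ∫ z in Ioi (0:ℝ), z * C.Th x z

/-- The parameter `ε` determined by `x`. -/
noncomputable def eps : ℝ := x.2 / C.K * C.m1 x

/-- The parameter `ε̃` determined by `x`; `ε̃/ε = m0/m1` is the second compatibility condition. -/
noncomputable def ept : ℝ := x.2 / C.K * C.m0 x

/-- The exponent in `a(ξ) ψ(z) / ψ(ξ) = a(z) exp (∫_z^ξ (1 - ε - ε̃ y) a(y) dy)`. -/
noncomputable def ex (z ξ : ℝ) : ℝ :=
  ∫ y in z..ξ, (1 - C.eps x - C.ept x * y) * C.a y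

/-- The convolution square of the profile. -/
noncomputable def hh : ℝ → ℝ := conv (C.Th x) (C.Th x)

/-- The integrand of the fixed-point equation, without the factor `a(z)`. -/
noncomputable def G (z ξ : ℝ) : ℝ := ξ * Real.exp (C.ex x z ξ) * C.hh x ξ

/-- The right-hand side of the integral equation, without the factors `ε` and `a(z)`. -/
noncomputable def T (z : ℝ) : ℝ := ∫ ξ in Ioi z, C.G x z ξ

/-- The new profile divided by `a`, normalised to take the value `1` at `0`. -/
noncomputable def U (z : ℝ) : ℝ := C.T x z / C.T x 0

lemma P1 : 1 ≤ C.P := by linarith [C.hP]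
lemma P0 : 0 < C.P := by linarith [C.hP]

/-- All powers of `P` up to the thirtieth are dominated by `K`. -/
lemma pow_le_K {n : ℕ} (hn : n ≤ 30) : C.P ^ n ≤ C.K :=
  (pow_le_pow_right₀ C.P1 hn).trans C.big

lemma K1 : 1 ≤ C.K := by simpa using C.pow_le_K (n := 0) (by norm_num)

variable {C x y}

lemma Th_cont (hx : Adm C x) : Continuous (C.Th x) :=
  C.cont.mul ((om_cont _).mul hx.cont)

lemma Th_nn (hx : Adm C x) (z : ℝ) : 0 ≤ C.Th x z :=
  mul_nonneg (C.pos z).le (mul_nonneg (om_pos _ _).le (hx.nn z))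

lemma Th_eq {z : ℝ} (hz : 0 ≤ z) : C.Th x z = (C.a z * (1 + z)) * (W C.β z * x.1 z) := by
  unfold Th; rw [om_eq _ hz]; ring

lemma Th_le (hx : Adm C x) {z : ℝ} (hz : 0 ≤ z) : C.Th x z ≤ C.P ^ 2 * W C.β z := by
  rw [Th_eq hz]
  have hW := (W_pos C.β z).le
  calc _ ≤ C.P * (W C.β z * C.P) := by
        refine mul_le_mul (C.aP z hz) (mul_le_mul_of_nonneg_left (hx.le z) hW)
          (mul_nonneg hW (hx.nn z)) C.P0.le
    _ = _ := by ring

lemma Th_sub {d : ℝ} (h : Near x y d) {z : ℝ} (hz : 0 ≤ z) :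
    |C.Th x z - C.Th y z| ≤ C.P * W C.β z * d := by
  rw [Th_eq hz, Th_eq hz]
  have hW := (W_pos C.β z).le
  have : C.a z * (1 + z) * (W C.β z * x.1 z) - C.a z * (1 + z) * (W C.β z * y.1 z) =
    (C.a z * (1 + z)) * W C.β z * (x.1 z - y.1 z) := by ring
  have h0 : 0 ≤ C.a z * (1 + z) := mul_nonneg (C.pos z).le (by linarith)
  rw [this, abs_mul, abs_of_nonneg (mul_nonneg h0 hW)]
  exact mul_le_mul (mul_le_mul_of_nonneg_right (C.aP z hz) hW) (h.g z) (abs_nonneg _)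
    (mul_nonneg C.P0.le hW)

lemma hh_cont (hx : Adm C x) : Continuous (C.hh x) := by
  have hT := Th_cont hx
  unfold hh conv
  refine continuous_const.mul ?_
  refine intervalIntegral.continuous_parametric_intervalIntegral_of_continuous
    (f := fun z y => C.Th x (z - y) * C.Th x y) ?_ continuous_id
  fun_prop

lemma hh_nn (hx : Adm C x) {ξ : ℝ} (hξ : 0 ≤ ξ) : 0 ≤ C.hh x ξ := by
  unfold hh conv
  refine mul_nonneg (by norm_num) (intervalIntegral.integral_nonneg hξ fun y _ => ?_)
  exact mul_nonneg (Th_nn hx _) (Th_nn hx _)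

lemma conv_bound {f : ℝ → ℝ} {B ξ : ℝ} (hB : 0 ≤ B) (hξ : 0 ≤ ξ)
    (h : ∀ y, 0 ≤ y → y ≤ ξ → |f y| ≤ B * (W C.β (ξ - y) * W C.β y)) :
    |1/2 * ∫ y in (0:ℝ)..ξ, f y| ≤ 2 * B * W C.β ξ := by
  have hc : Continuous fun y => B * (W C.β (ξ - y) * W C.β y) :=
    continuous_const.mul (((W_cont C.β).comp (continuous_const.sub continuous_id)).mul (W_cont C.β))
  have h1 := intervalIntegral.norm_integral_le_of_norm_le (μ := volume) (f := f) hξ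
    (Eventually.of_forall fun t (ht : t ∈ Ioc 0 ξ) => h t ht.1.le ht.2) (hc.intervalIntegrable 0 ξ)
  rw [intervalIntegral.integral_const_mul] at h1
  have h2 := mul_le_mul_of_nonneg_left (W_conv C.β hξ) hB
  rw [abs_mul, abs_of_nonneg (by norm_num : (0:ℝ) ≤ 1/2)]
  rw [Real.norm_eq_abs] at h1
  linarith

lemma hh_le (hx : Adm C x) {ξ : ℝ} (hξ : 0 ≤ ξ) : C.hh x ξ ≤ C.P ^ 5 * W C.β ξ := by
  have h1 := conv_bound (C := C) (f := fun y => C.Th x (ξ - y) * C.Th x y) (B := C.P ^ 4)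
    (by have := C.P0; positivity) hξ (by
      intro y h0 h1
      rw [abs_of_nonneg (mul_nonneg (Th_nn hx _) (Th_nn hx _))]
      refine (mul_le_mul (Th_le hx (by linarith)) (Th_le hx h0) (Th_nn hx _)
        (mul_nonneg (by have := C.P0; positivity) (W_pos _ _).le)).trans (le_of_eq (by ring)))
  refine (le_abs_self _).trans (h1.trans ?_)
  refine mul_le_mul_of_nonneg_right ?_ (W_pos _ _).le
  have : 0 ≤ C.P ^ 4 := by have := C.P0; positivity
  nlinarith [C.hP]

lemma hh_sub (hx : Adm C x) (hy : Adm C y) {d : ℝ} (h : Near x y d) {ξ : ℝ} (hξ : 0 ≤ ξ) :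
    |C.hh x ξ - C.hh y ξ| ≤ C.P ^ 4 * W C.β ξ * d := by
  have hP := C.P0
  have hd := h.d0
  have hxT := Th_cont hx
  have hyT := Th_cont hy
  have h1 := conv_bound (C := C)
    (f := fun t => C.Th x (ξ - t) * C.Th x t - C.Th y (ξ - t) * C.Th y t)
    (B := 2 * C.P ^ 3 * d) (by positivity) hξ (by
      intro t h0 h1
      have e : C.Th x (ξ - t) * C.Th x t - C.Th y (ξ - t) * C.Th y t =
        C.Th x (ξ - t) * (C.Th x t - C.Th y t) + (C.Th x (ξ - t) - C.Th y (ξ - t)) * C.Th y t := by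
        ring
      have hW1 := (W_pos C.β t).le
      have hW2 := (W_pos C.β (ξ - t)).le
      have a1 : |C.Th x (ξ - t) * (C.Th x t - C.Th y t)| ≤
          C.P ^ 2 * W C.β (ξ - t) * (C.P * W C.β t * d) := by
        rw [abs_mul, abs_of_nonneg (Th_nn hx _)]
        exact mul_le_mul (Th_le hx (by linarith)) (Th_sub h h0) (abs_nonneg _) (by positivity)
      have a2 : |(C.Th x (ξ - t) - C.Th y (ξ - t)) * C.Th y t| ≤
          (C.P * W C.β (ξ - t) * d) * (C.P ^ 2 * W C.β t) := by
        rw [abs_mul, abs_of_nonneg (Th_nn hy _)]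
        exact mul_le_mul (Th_sub h (by linarith)) (Th_le hy h0) (Th_nn hy _) (by positivity)
      rw [e]
      refine (abs_add_le _ _).trans ((add_le_add a1 a2).trans (le_of_eq (by ring))))
  have e : C.hh x ξ - C.hh y ξ =
      1/2 * ∫ t in (0:ℝ)..ξ, (C.Th x (ξ - t) * C.Th x t - C.Th y (ξ - t) * C.Th y t) := by
    unfold hh conv
    rw [intervalIntegral.integral_sub, mul_sub]
    · exact ((hxT.comp (continuous_const.sub continuous_id)).mul hxT).intervalIntegrable _ _
    · exact ((hyT.comp (continuous_const.sub continuous_id)).mul hyT).intervalIntegrable _ _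
  rw [e]
  refine h1.trans ?_
  have hW := (W_pos C.β ξ).le
  have : 2 * (2 * C.P ^ 3 * d) * W C.β ξ = 4 * (C.P ^ 3 * (W C.β ξ * d)) := by ring
  rw [this]
  have : C.P ^ 4 * W C.β ξ * d = C.P * (C.P ^ 3 * (W C.β ξ * d)) := by ring
  rw [this]
  exact mul_le_mul_of_nonneg_right (by linarith [C.hP]) (by positivity)

lemma exp_beta_le {z : ℝ} (hz : 0 ≤ z) : Real.exp (-C.β * z) ≤ Real.exp (-(z - 0)) := by
  have := C.hβ; have := C.hc
  exact Real.exp_le_exp.2 (by nlinarith)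

lemma Th_bd (hx : Adm C x) {z : ℝ} (hz : 0 ≤ z) : |C.Th x z| ≤ C.P ^ 2 * Real.exp (-(z - 0)) := by
  rw [abs_of_nonneg (Th_nn hx z)]
  refine (Th_le hx hz).trans (mul_le_mul_of_nonneg_left ((W_le_exp _ hz).trans (exp_beta_le hz)) ?_)
  have := C.P0; positivity

lemma zTh_bd (hx : Adm C x) {z : ℝ} (hz : 0 ≤ z) :
    |z * C.Th x z| ≤ C.P ^ 2 * Real.exp (-(z - 0)) := by
  have hP := C.P0
  rw [abs_of_nonneg (mul_nonneg hz (Th_nn hx z))]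
  calc _ ≤ z * (C.P ^ 2 * W C.β z) := mul_le_mul_of_nonneg_left (Th_le hx hz) hz
    _ = C.P ^ 2 * (z * W C.β z) := by ring
    _ ≤ _ := mul_le_mul_of_nonneg_left ((mul_W_le_exp _ hz).trans (exp_beta_le hz)) (by positivity)

lemma Th_int (hx : Adm C x) : IntegrableOn (C.Th x) (Ioi 0) :=
  integrableOn_Ioi_of_le (Th_cont hx) fun _ h => Th_bd hx h.le

lemma zTh_int (hx : Adm C x) : IntegrableOn (fun z => z * C.Th x z) (Ioi 0) :=
  integrableOn_Ioi_of_le (continuous_id.mul (Th_cont hx)) fun _ h => zTh_bd hx h.le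

lemma m0_nn (hx : Adm C x) : 0 ≤ C.m0 x :=
  setIntegral_nonneg measurableSet_Ioi fun z _ => Th_nn hx z

lemma m1_nn (hx : Adm C x) : 0 ≤ C.m1 x :=
  setIntegral_nonneg measurableSet_Ioi fun z (hz : 0 < z) => mul_nonneg hz.le (Th_nn hx z)

lemma m0_le (hx : Adm C x) : C.m0 x ≤ C.P ^ 2 :=
  (le_abs_self _).trans (abs_integral_Ioi_le fun _ h => Th_bd hx h.le)

lemma m1_le (hx : Adm C x) : C.m1 x ≤ C.P ^ 2 :=
  (le_abs_self _).trans (abs_integral_Ioi_le fun _ h => zTh_bd hx h.le)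

lemma m0_sub (hx : Adm C x) (hy : Adm C y) {d : ℝ} (h : Near x y d) :
    |C.m0 x - C.m0 y| ≤ C.P * d := by
  unfold m0
  rw [← integral_sub (Th_int hx) (Th_int hy)]
  refine abs_integral_Ioi_le fun z hz => (Th_sub h hz.le).trans ?_
  have := (W_le_exp C.β hz.le).trans (exp_beta_le hz.le)
  have hP := C.P0
  have hd := h.d0
  calc _ = C.P * d * W C.β z := by ring
    _ ≤ _ := mul_le_mul_of_nonneg_left this (by positivity)

lemma m1_sub (hx : Adm C x) (hy : Adm C y) {d : ℝ} (h : Near x y d) :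
    |C.m1 x - C.m1 y| ≤ C.P * d := by
  unfold m1
  rw [← integral_sub (zTh_int hx) (zTh_int hy)]
  refine abs_integral_Ioi_le fun z hz => ?_
  have := (mul_W_le_exp C.β hz.le).trans (exp_beta_le hz.le)
  have hP := C.P0
  have hd := h.d0
  rw [← mul_sub, abs_mul, abs_of_pos hz]
  calc _ ≤ z * (C.P * W C.β z * d) := mul_le_mul_of_nonneg_left (Th_sub h hz.le) hz.le
    _ = C.P * d * (z * W C.β z) := by ring
    _ ≤ _ := mul_le_mul_of_nonneg_left this (by positivity)

lemma par_le (hx : Adm C x) {m : ℝ} (h : m ≤ C.P ^ 2) :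
    x.2 / C.K * m ≤ C.P ^ 2 / C.K := by
  have hK := C.hK
  have hP := C.P0
  have h1 : x.2 * m ≤ C.P ^ 2 := by
    have := mul_le_mul_of_nonneg_left h hx.s0
    have := mul_le_mul_of_nonneg_right hx.s1 (by positivity : 0 ≤ C.P ^ 2)
    linarith
  rw [div_mul_eq_mul_div]
  gcongr

lemma par_sub (hy : Adm C y) {d m n : ℝ} (h : Near x y d) (hm : 0 ≤ m) (hm' : m ≤ C.P ^ 2)
    (hmn : |m - n| ≤ C.P * d) : |x.2 / C.K * m - y.2 / C.K * n| ≤ C.P ^ 3 / C.K * d := by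
  have hK := C.hK
  have hP := C.P0
  have hd := h.d0
  have e : x.2 / C.K * m - y.2 / C.K * n = ((x.2 - y.2) * m + y.2 * (m - n)) / C.K := by
    field_simp; ring
  rw [e, abs_div, abs_of_pos hK, div_mul_eq_mul_div]
  gcongr
  have a1 : |(x.2 - y.2) * m| ≤ d * C.P ^ 2 := by
    rw [abs_mul, abs_of_nonneg hm]
    exact mul_le_mul h.s hm' hm hd
  have a2 : |y.2 * (m - n)| ≤ 1 * (C.P * d) := by
    rw [abs_mul, abs_of_nonneg hy.s0]
    exact mul_le_mul hy.s1 hmn (abs_nonneg _) zero_le_one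
  refine (abs_add_le _ _).trans ((add_le_add a1 a2).trans ?_)
  have : d * C.P ^ 2 + 1 * (C.P * d) = (C.P + 1) * (C.P * d) := by ring
  rw [this]
  have : C.P ^ 3 * d = C.P ^ 2 * (C.P * d) := by ring
  rw [this]
  refine mul_le_mul_of_nonneg_right ?_ (by positivity)
  nlinarith [C.hP]

lemma pow_div_K_le {n m : ℕ} (h : n + m ≤ 30) : C.P ^ n / C.K ≤ 1 / C.P ^ m := by
  have hP := C.P0
  have hK := C.hK
  rw [div_le_div_iff₀ hK (by positivity), ← pow_add, one_mul]
  exact C.pow_le_K h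

lemma pow_div_K_le_one {n : ℕ} (h : n ≤ 30) : C.P ^ n / C.K ≤ 1 := by
  simpa using pow_div_K_le (C := C) (n := n) (m := 0) (by omega)

lemma eps_nn (hx : Adm C x) : 0 ≤ C.eps x :=
  mul_nonneg (div_nonneg hx.s0 C.hK.le) (m1_nn hx)

lemma ept_nn (hx : Adm C x) : 0 ≤ C.ept x :=
  mul_nonneg (div_nonneg hx.s0 C.hK.le) (m0_nn hx)

lemma par_bd (hx : Adm C x) {t : ℝ} (ht : 0 ≤ t) :
    C.eps x + C.ept x * t ≤ C.P ^ 2 / C.K * (1 + t) := by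
  have h1 : C.eps x ≤ C.P ^ 2 / C.K := par_le hx (m1_le hx)
  have h2 : C.ept x ≤ C.P ^ 2 / C.K := par_le hx (m0_le hx)
  nlinarith [mul_le_mul_of_nonneg_right h2 ht]

lemma par_le_one (hx : Adm C x) {t : ℝ} (ht : 0 ≤ t) (ht1 : t ≤ 1) :
    C.eps x + C.ept x * t ≤ 1 := by
  have h1 := par_bd hx ht
  have h2 : C.P ^ 2 / C.K ≤ 1 / C.P ^ 1 := pow_div_K_le (by norm_num)
  have h3 : 1 / C.P ^ 1 ≤ 1 / 2 := by
    rw [pow_one]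
    exact one_div_le_one_div_of_le (by norm_num) (by linarith [C.hP])
  nlinarith

variable (C x y) in
lemma ei_cont : Continuous fun t => (1 - C.eps x - C.ept x * t) * C.a t :=
  Continuous.mul (by fun_prop) C.cont

lemma ex_sub (hx : Adm C x) (hy : Adm C y) {d : ℝ} (h : Near x y d) {z ξ : ℝ} (hz : 0 ≤ z)
    (hξ : 0 ≤ ξ) : |C.ex x z ξ - C.ex y z ξ| ≤ C.P ^ 4 / C.K * d * |ξ - z| := by
  have hK := C.hK
  have hP := C.P0
  have hd := h.d0
  unfold ex
  rw [← intervalIntegral.integral_sub ((ei_cont C x).intervalIntegrable _ _)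
    ((ei_cont C y).intervalIntegrable _ _)]
  refine intervalIntegral.norm_integral_le_of_norm_le_const (E := ℝ) fun t ht => ?_
  have ht0 : 0 ≤ t := by
    rcases le_total z ξ with h | h
    · rw [uIoc_of_le h] at ht; linarith [ht.1]
    · rw [uIoc_of_ge h] at ht; linarith [ht.1]
  have h1 : |C.eps x - C.eps y| ≤ C.P ^ 3 / C.K * d :=
    par_sub hy h (m1_nn hx) (m1_le hx) (m1_sub hx hy h)
  have h2 : |C.ept x - C.ept y| ≤ C.P ^ 3 / C.K * d :=
    par_sub hy h (m0_nn hx) (m0_le hx) (m0_sub hx hy h)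
  have e : (1 - C.eps x - C.ept x * t) * C.a t - (1 - C.eps y - C.ept y * t) * C.a t =
    -(((C.eps x - C.eps y) + (C.ept x - C.ept y) * t) * C.a t) := by ring
  rw [e, norm_neg, Real.norm_eq_abs, abs_mul, abs_of_pos (C.pos t)]
  have h3 : |(C.eps x - C.eps y) + (C.ept x - C.ept y) * t| ≤ C.P ^ 3 / C.K * d * (1 + t) := by
    refine (abs_add_le _ _).trans ?_
    rw [abs_mul, abs_of_nonneg ht0]
    nlinarith [mul_le_mul_of_nonneg_right h2 ht0]
  calc _ ≤ C.P ^ 3 / C.K * d * (1 + t) * C.a t := mul_le_mul_of_nonneg_right h3 (C.pos t).le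
    _ = C.P ^ 3 / C.K * d * (C.a t * (1 + t)) := by ring
    _ ≤ C.P ^ 3 / C.K * d * C.P := mul_le_mul_of_nonneg_left (C.aP t ht0) (by positivity)
    _ = _ := by ring

lemma ex_le_int (hx : Adm C x) {z ξ : ℝ} (hz : 0 ≤ z) (h : z ≤ ξ) :
    C.ex x z ξ ≤ ∫ t in z..ξ, C.a t := by
  refine intervalIntegral.integral_mono_on h ((ei_cont C x).intervalIntegrable _ _)
    (C.cont.intervalIntegrable _ _) fun t ht => ?_
  have := C.pos t
  have := mul_nonneg (ept_nn hx) (hz.trans ht.1)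
  have := eps_nn hx
  nlinarith

lemma ex_nn (hx : Adm C x) {z ξ : ℝ} (hz : 0 ≤ z) (h : z ≤ ξ) (h1 : ξ ≤ 1) :
    0 ≤ C.ex x z ξ := by
  refine intervalIntegral.integral_nonneg h fun t ht => mul_nonneg ?_ (C.pos t).le
  have := par_le_one hx (hz.trans ht.1) (ht.2.trans h1)
  linarith

lemma int_a_le {z ξ : ℝ} (hz : 0 ≤ z) (h : z ≤ ξ) (h1 : ξ ≤ 7/16 ∨ 3/4 ≤ z) :
    ∫ t in z..ξ, C.a t ≤ C.c * (ξ - z) := by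
  have := intervalIntegral.integral_mono_on (g := fun _ : ℝ => C.c) h
    (C.cont.intervalIntegrable (μ := volume) _ _)
    (continuous_const.intervalIntegrable z ξ) fun t ht => C.ac t (hz.trans ht.1) (h1.imp ht.2.trans fun h => h.trans ht.1)
  rw [intervalIntegral.integral_const, smul_eq_mul, mul_comm] at this
  exact this

/-- The exponent is at most `log K²`, up to growth at the linear rate `c`. -/
lemma ex_le0 (hx : Adm C x) {ξ : ℝ} (hξ : 0 ≤ ξ) :
    C.ex x 0 ξ ≤ (∫ t in (0:ℝ)..1, C.a t) + C.c * ξ := by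
  refine (ex_le_int hx le_rfl hξ).trans ?_
  have hi : ∀ u v, IntervalIntegrable C.a volume u v := fun u v => C.cont.intervalIntegrable _ _
  rw [← intervalIntegral.integral_add_adjacent_intervals (hi 0 1) (hi 1 ξ)]
  have hc := C.hc
  rcases le_total ξ 1 with h | h
  · have h1 : 0 ≤ ∫ t in ξ..1, C.a t := intervalIntegral.integral_nonneg h fun t _ => (C.pos t).le
    rw [intervalIntegral.integral_symm] at h1
    have : 0 ≤ C.c * ξ := by positivity
    linarith
  · have := int_a_le (C := C) (z := 1) (by norm_num) h (Or.inr (by norm_num))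
    linarith

lemma ex_tail (hx : Adm C x) {z ξ : ℝ} (hz : 1 ≤ z) (h : z ≤ ξ) : C.ex x z ξ ≤ C.c * (ξ - z) :=
  (ex_le_int hx (by linarith) h).trans (int_a_le (by linarith) h (Or.inr (by linarith)))

/-- Past the peak the exponent is within a constant of its largest possible value `∫₀¹ a`. -/
lemma ex_low (hx : Adm C x) {ξ : ℝ} (h34 : 3/4 ≤ ξ) (h1 : ξ ≤ 1) :
    (∫ t in (0:ℝ)..1, C.a t) - C.c - 1 ≤ C.ex x 0 ξ := by
  have hi : ∀ u v, IntervalIntegrable C.a volume u v := fun u v => C.cont.intervalIntegrable _ _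
  have h0 : (0:ℝ) ≤ ξ := by linarith
  have a1 : ∫ t in (0:ℝ)..ξ, (C.a t - 1) ≤ C.ex x 0 ξ := by
    refine intervalIntegral.integral_mono_on h0
      ((C.cont.sub continuous_const).intervalIntegrable _ _)
      ((ei_cont C x).intervalIntegrable _ _) fun t ht => ?_
    have b1 := mul_le_mul_of_nonneg_right (par_bd hx ht.1) (C.pos t).le
    have b2 : C.P ^ 2 / C.K * (1 + t) * C.a t ≤ 1 := by
      have hK := C.hK
      have hP := C.P0
      calc _ = C.P ^ 2 / C.K * (C.a t * (1 + t)) := by ring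
        _ ≤ C.P ^ 2 / C.K * C.P := mul_le_mul_of_nonneg_left (C.aP t ht.1) (by positivity)
        _ = C.P ^ 3 / C.K := by ring
        _ ≤ 1 := pow_div_K_le_one (by norm_num)
    linarith
  rw [intervalIntegral.integral_sub (hi _ _) (continuous_const.intervalIntegrable _ _),
    intervalIntegral.integral_const] at a1
  have a2 := int_a_le (C := C) h0 h1 (Or.inr h34)
  have a3 := intervalIntegral.integral_add_adjacent_intervals (hi 0 ξ) (hi ξ 1)
  have hc := C.hc
  simp only [smul_eq_mul] at a1
  nlinarith

variable (C x y) in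
lemma ex_add (z w ξ : ℝ) : C.ex x z w + C.ex x w ξ = C.ex x z ξ :=
  intervalIntegral.integral_add_adjacent_intervals ((ei_cont C x).intervalIntegrable _ _)
    ((ei_cont C x).intervalIntegrable _ _)

variable (C x y) in
lemma ex_symm (z w : ℝ) : C.ex x z w = - C.ex x w z := intervalIntegral.integral_symm _ _

variable (C x y) in
lemma ex_cont (z : ℝ) : Continuous (C.ex x z) :=
  intervalIntegral.continuous_primitive (fun _ _ => (ei_cont C x).intervalIntegrable _ _) z

variable (C x y) in
lemma ex_cont' (ξ : ℝ) : Continuous fun z => C.ex x z ξ := by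
  simp_rw [fun z => ex_symm C x z ξ]
  exact (ex_cont C x ξ).neg

lemma G_cont (hx : Adm C x) (z : ℝ) : Continuous (C.G x z) := by
  have h1 := ex_cont C x z
  have h2 := hh_cont hx
  unfold G
  fun_prop

lemma G_nn (hx : Adm C x) (z : ℝ) {ξ : ℝ} (hξ : 0 ≤ ξ) : 0 ≤ C.G x z ξ :=
  mul_nonneg (mul_nonneg hξ (Real.exp_pos _).le) (hh_nn hx hξ)

lemma G_le (hx : Adm C x) {z ξ m : ℝ} (hξ : 0 ≤ ξ) (hm : C.ex x z ξ ≤ m) :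
    |C.G x z ξ| ≤ C.P ^ 5 * (Real.exp m * (ξ * W C.β ξ)) := by
  rw [abs_of_nonneg (G_nn hx z hξ)]
  have h1 := Real.exp_le_exp.2 hm
  calc _ ≤ ξ * Real.exp m * (C.P ^ 5 * W C.β ξ) := by
        unfold G
        exact mul_le_mul (mul_le_mul_of_nonneg_left h1 hξ) (hh_le hx hξ) (hh_nn hx hξ)
          (by positivity)
    _ = _ := by ring

lemma G_sub (hx : Adm C x) (hy : Adm C y) {d : ℝ} (h : Near x y d) {z ξ m : ℝ} (hz : 0 ≤ z)
    (hξ : 0 ≤ ξ) (hm : C.ex x z ξ ≤ m) (hm' : C.ex y z ξ ≤ m) :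
    |C.G x z ξ - C.G y z ξ| ≤ C.P ^ 4 * d * (Real.exp m * (ξ * W C.β ξ)) * (1 + |ξ - z|) := by
  have hP := C.P0
  have hd := h.d0
  have hK := C.hK
  have hW := (W_pos C.β ξ).le
  have e : C.G x z ξ - C.G y z ξ = ξ * ((Real.exp (C.ex x z ξ) - Real.exp (C.ex y z ξ)) * C.hh x ξ
      + Real.exp (C.ex y z ξ) * (C.hh x ξ - C.hh y ξ)) := by unfold G; ring
  have a1 : |(Real.exp (C.ex x z ξ) - Real.exp (C.ex y z ξ)) * C.hh x ξ| ≤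
      Real.exp m * (C.P ^ 4 / C.K * d * |ξ - z|) * (C.P ^ 5 * W C.β ξ) := by
    rw [abs_mul, abs_of_nonneg (hh_nn hx hξ)]
    refine mul_le_mul ((exp_sub_exp_le hm hm').trans ?_) (hh_le hx hξ) (hh_nn hx hξ) (by positivity)
    exact mul_le_mul_of_nonneg_left (ex_sub hx hy h hz hξ) (Real.exp_pos _).le
  have a2 : |Real.exp (C.ex y z ξ) * (C.hh x ξ - C.hh y ξ)| ≤
      Real.exp m * (C.P ^ 4 * W C.β ξ * d) := by
    rw [abs_mul, abs_of_pos (Real.exp_pos _)]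
    exact mul_le_mul (Real.exp_le_exp.2 hm') (hh_sub hx hy h hξ) (abs_nonneg _) (Real.exp_pos _).le
  rw [e, abs_mul, abs_of_nonneg hξ]
  have a3 : Real.exp m * (C.P ^ 4 / C.K * d * |ξ - z|) * (C.P ^ 5 * W C.β ξ) ≤
      Real.exp m * (C.P ^ 4 * d * |ξ - z|) * W C.β ξ := by
    have h1 : C.P ^ 5 / C.K ≤ 1 := pow_div_K_le_one (by norm_num)
    calc _ = Real.exp m * (C.P ^ 4 * d * |ξ - z|) * W C.β ξ * (C.P ^ 5 / C.K) := by ring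
      _ ≤ _ := mul_le_of_le_one_right (by positivity) h1
  calc _ ≤ ξ * (Real.exp m * (C.P ^ 4 * d * |ξ - z|) * W C.β ξ
        + Real.exp m * (C.P ^ 4 * W C.β ξ * d)) :=
        mul_le_mul_of_nonneg_left ((abs_add_le _ _).trans (add_le_add (a1.trans a3) a2)) hξ
    _ = _ := by ring

/-- The weight absorbs the linear part of the exponent and leaves the factor `K²` of the peak. -/
lemma key0 {ξ : ℝ} (hξ : 0 ≤ ξ) : Real.exp ((∫ t in (0:ℝ)..1, C.a t) + C.c * ξ) * (ξ * W C.β ξ) ≤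
    C.K ^ 2 * Real.exp (-2 * ξ) := by
  have h1 := mul_W_le_exp C.β hξ
  have hβ := C.hβ
  calc _ ≤ Real.exp ((∫ t in (0:ℝ)..1, C.a t) + C.c * ξ) * Real.exp (-C.β * ξ) := by gcongr
    _ = C.K ^ 2 * Real.exp (C.c * ξ + -C.β * ξ) := by
      rw [Real.exp_add, ← C.hKA, mul_assoc, ← Real.exp_add]
    _ ≤ _ := by
      gcongr
      nlinarith

/-- Exponential growth at rate `c`, the rate beyond the peak, loses against the decay of the weight. -/
lemma key1 {z ξ : ℝ} (hz : 0 ≤ z) (h : z ≤ ξ) : Real.exp (C.c * (ξ - z)) * (ξ * W C.β ξ) ≤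
    om C.β z * Real.exp (-2 * (ξ - z)) := by
  have hξ := hz.trans h
  have hβ := C.hβ
  have h1 : ξ * W C.β ξ ≤ Real.exp (-C.β * ξ) / (1 + z) := by
    have : ξ * W C.β ξ ≤ om C.β ξ := by
      rw [om_eq _ hξ]
      exact mul_le_mul_of_nonneg_right (by linarith) (W_pos _ _).le
    refine this.trans ?_
    unfold om
    rw [abs_of_nonneg hξ]
    gcongr
  calc _ ≤ Real.exp (C.c * (ξ - z)) * (Real.exp (-C.β * ξ) / (1 + z)) := by gcongr
    _ = Real.exp (C.c * (ξ - z) + -C.β * ξ) / (1 + z) := by rw [Real.exp_add]; ring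
    _ ≤ Real.exp (-C.β * z + -2 * (ξ - z)) / (1 + z) := by
      refine div_le_div_of_nonneg_right (Real.exp_le_exp.2 ?_) (by linarith)
      nlinarith
    _ = _ := by unfold om; rw [Real.exp_add, abs_of_nonneg hz]; ring

lemma mul_exp_two_le {t : ℝ} (ht : 0 ≤ t) : Real.exp (-2 * t) * (1 + |t|) ≤ Real.exp (-t) := by
  rw [abs_of_nonneg ht]
  have h := Real.add_one_le_exp t
  calc _ ≤ Real.exp (-2 * t) * Real.exp t := by gcongr; linarith
    _ = _ := by rw [← Real.exp_add]; congr 1; ring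

lemma exp_two_le {t : ℝ} (ht : 0 ≤ t) : Real.exp (-2 * t) ≤ Real.exp (-t) :=
  Real.exp_le_exp.2 (by linarith)

lemma G0_bd (hx : Adm C x) {ξ : ℝ} (hξ : 0 ≤ ξ) :
    |C.G x 0 ξ| ≤ C.P ^ 5 * C.K ^ 2 * Real.exp (-(ξ - 0)) := by
  have hP := C.P0
  refine (G_le hx hξ (ex_le0 hx hξ)).trans ?_
  rw [mul_assoc, sub_zero]
  refine mul_le_mul_of_nonneg_left ((key0 hξ).trans ?_) (by positivity)
  exact mul_le_mul_of_nonneg_left (exp_two_le hξ) (by positivity)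

lemma G0_int (hx : Adm C x) : IntegrableOn (C.G x 0) (Ioi 0) :=
  integrableOn_Ioi_of_le (G_cont hx 0) fun _ h => G0_bd hx h.le

lemma T0_sub (hx : Adm C x) (hy : Adm C y) {d : ℝ} (h : Near x y d) :
    |C.T x 0 - C.T y 0| ≤ C.K ^ 2 * C.P ^ 4 * d := by
  have hP := C.P0
  have hd := h.d0
  unfold T
  rw [← integral_sub (G0_int hx) (G0_int hy)]
  refine abs_integral_Ioi_le fun ξ (hξ : 0 < ξ) => ?_
  refine (G_sub hx hy h le_rfl hξ.le (ex_le0 hx hξ.le) (ex_le0 hy hξ.le)).trans ?_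
  rw [sub_zero]
  calc _ ≤ C.P ^ 4 * d * (C.K ^ 2 * Real.exp (-2 * ξ)) * (1 + |ξ|) := by
        exact mul_le_mul_of_nonneg_right (mul_le_mul_of_nonneg_left (key0 hξ.le) (by positivity))
          (by positivity)
    _ = C.K ^ 2 * C.P ^ 4 * d * (Real.exp (-2 * ξ) * (1 + |ξ|)) := by ring
    _ ≤ _ := mul_le_mul_of_nonneg_left (mul_exp_two_le hξ.le) (by positivity)

lemma Gt_bd (hx : Adm C x) {z ξ : ℝ} (hz : 1 ≤ z) (hξ : z ≤ ξ) :
    |C.G x z ξ| ≤ C.P ^ 5 * om C.β z * Real.exp (-(ξ - z)) := by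
  have hP := C.P0
  refine (G_le hx (by linarith) (ex_tail hx hz hξ)).trans ?_
  rw [mul_assoc]
  refine mul_le_mul_of_nonneg_left ((key1 (by linarith) hξ).trans ?_) (by positivity)
  exact mul_le_mul_of_nonneg_left (exp_two_le (by linarith)) (om_pos _ _).le

lemma T_tail_le (hx : Adm C x) {z : ℝ} (hz : 1 ≤ z) : |C.T x z| ≤ C.P ^ 5 * om C.β z :=
  abs_integral_Ioi_le fun _ h => Gt_bd hx hz h.le

lemma T_tail_sub (hx : Adm C x) (hy : Adm C y) {d : ℝ} (h : Near x y d) {z : ℝ} (hz : 1 ≤ z) :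
    |C.T x z - C.T y z| ≤ C.P ^ 4 * d * om C.β z := by
  have hP := C.P0
  have hd := h.d0
  have hom := om_pos C.β z
  unfold T
  rw [← integral_sub
    (integrableOn_Ioi_of_le (G_cont hx z) fun _ h => Gt_bd hx hz h.le)
    (integrableOn_Ioi_of_le (G_cont hy z) fun _ h => Gt_bd hy hz h.le)]
  refine abs_integral_Ioi_le fun ξ hξ => ?_
  refine (G_sub hx hy h (by linarith) (by linarith) (ex_tail hx hz hξ.le)
    (ex_tail hy hz hξ.le)).trans ?_
  calc _ ≤ C.P ^ 4 * d * (om C.β z * Real.exp (-2 * (ξ - z))) * (1 + |ξ - z|) := by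
        exact mul_le_mul_of_nonneg_right (mul_le_mul_of_nonneg_left
          (key1 (by linarith) hξ.le) (by positivity)) (by positivity)
    _ = C.P ^ 4 * d * om C.β z * (Real.exp (-2 * (ξ - z)) * (1 + |ξ - z|)) := by ring
    _ ≤ _ := mul_le_mul_of_nonneg_left (mul_exp_two_le (by linarith)) (by positivity)

lemma inv_om_le {z : ℝ} (hz : 0 ≤ z) (h1 : z ≤ 1) : 1 / C.P ≤ om C.β z := by
  have hP := C.P0
  have hβ : 0 ≤ C.β := by linarith [C.hβ, C.hc]
  unfold om
  rw [abs_of_nonneg hz, div_le_div_iff₀ hP (by linarith), one_mul]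
  have h3 : Real.exp (-C.β * z) * Real.exp C.β ≥ 1 := by
    rw [← Real.exp_add]
    exact Real.one_le_exp (by nlinarith)
  have h4 := mul_le_mul_of_nonneg_left C.hPβ (Real.exp_pos (-C.β * z)).le
  nlinarith

lemma Th_low (hx : Adm C x) {z : ℝ} (h1 : 5/16 ≤ z) (h2 : z ≤ 7/16) :
    1 / (2 * C.P ^ 2) ≤ C.Th x z := by
  have hP := C.P0
  have hz : 0 ≤ z := by linarith
  have hz1 : z ≤ 1 := by linarith
  have e : 1 / (2 * C.P ^ 2) = 1/2 * (1 / C.P * (1 / C.P)) := by field_simp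
  rw [e]
  unfold Th
  have := (om_pos C.β z).le
  refine mul_le_mul (C.ah z hz hz1) ?_ (by positivity) (C.pos z).le
  exact mul_le_mul (inv_om_le hz hz1) (hx.low z h1 h2) (by positivity) this

/-- Two points of `[5/16, 7/16]`, where the profile is bounded below, add up to a point beyond the
near-degeneracy of `1/a` at `1/2`. -/
lemma hh_low (hx : Adm C x) {ξ : ℝ} (h1 : 3/4 ≤ ξ) (h2 : ξ ≤ 13/16) :
    1 / (128 * C.P ^ 4) ≤ C.hh x ξ := by
  have hP := C.P0
  have hT := Th_cont hx
  have hc : Continuous fun y => C.Th x (ξ - y) * C.Th x y :=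
    (hT.comp (continuous_const.sub continuous_id)).mul hT
  have a1 : ∫ y in (3/8:ℝ)..7/16, C.Th x (ξ - y) * C.Th x y ≤
      ∫ y in (0:ℝ)..ξ, C.Th x (ξ - y) * C.Th x y :=
    intervalIntegral.integral_mono_interval (by norm_num) (by norm_num) (by linarith)
      (Eventually.of_forall fun y => mul_nonneg (Th_nn hx _) (Th_nn hx _))
      (hc.intervalIntegrable _ _)
  have a2 : ∫ y in (3/8:ℝ)..7/16, (1 / (2 * C.P ^ 2) * (1 / (2 * C.P ^ 2))) ≤
      ∫ y in (3/8:ℝ)..7/16, C.Th x (ξ - y) * C.Th x y := by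
    refine intervalIntegral.integral_mono_on (by norm_num)
      (continuous_const.intervalIntegrable _ _) (hc.intervalIntegrable _ _) fun y hy => ?_
    exact mul_le_mul (Th_low hx (by linarith [hy.2]) (by linarith [hy.1]))
      (Th_low hx (by linarith [hy.1]) (by linarith [hy.2])) (by positivity) (Th_nn hx _)
  rw [intervalIntegral.integral_const, smul_eq_mul] at a2
  have e : 1 / (128 * C.P ^ 4) =
      1/2 * ((7/16 - 3/8) * (1 / (2 * C.P ^ 2) * (1 / (2 * C.P ^ 2)))) := by
    field_simp; norm_num
  rw [e]
  unfold hh conv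
  linarith

/-- The normalizing integral has the full exponential size `K²`, up to powers of `P`. -/
lemma T0_low (hx : Adm C x) : C.K ^ 2 / C.P ^ 7 ≤ C.T x 0 := by
  have hP := C.P0
  have hK := C.hK
  have a1 : ∫ ξ in Ioc (3/4:ℝ) (13/16), C.G x 0 ξ ≤ C.T x 0 := by
    refine setIntegral_mono_set (G0_int hx) ?_ (LE.le.eventuallyLE ?_)
    · exact (ae_restrict_iff' measurableSet_Ioi).2
        (Eventually.of_forall fun ξ (hξ : 0 < ξ) => G_nn hx 0 hξ.le)
    · intro t ht
      have := ht.1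
      exact lt_trans (by norm_num) this
  rw [← intervalIntegral.integral_of_le (by norm_num)] at a1
  have a2 : ∫ ξ in (3/4:ℝ)..13/16, (3/4 * (C.K ^ 2 / C.P) * (1 / (128 * C.P ^ 4))) ≤
      ∫ ξ in (3/4:ℝ)..13/16, C.G x 0 ξ := by
    refine intervalIntegral.integral_mono_on (by norm_num)
      (continuous_const.intervalIntegrable _ _) ((G_cont hx 0).intervalIntegrable _ _) fun ξ hξ => ?_
    have b1 : C.K ^ 2 / C.P ≤ Real.exp (C.ex x 0 ξ) := by
      have c1 := Real.exp_le_exp.2 (ex_low hx hξ.1 (by linarith [hξ.2]))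
      refine le_trans ?_ c1
      rw [sub_sub, Real.exp_sub, ← C.hKA]
      have c2 : Real.exp (C.c + 1) ≤ C.P := by
        have := Real.exp_le_exp.2 (show C.c + 1 ≤ C.β by linarith [C.hβ])
        linarith [C.hPβ, Real.exp_pos C.β]
      gcongr
    unfold G
    refine mul_le_mul (mul_le_mul hξ.1 b1 (by positivity) (by linarith [hξ.1]))
      (hh_low hx hξ.1 hξ.2) (by positivity) ?_
    exact mul_nonneg (by linarith [hξ.1]) (Real.exp_pos _).le
  rw [intervalIntegral.integral_const, smul_eq_mul] at a2
  refine le_trans ?_ (a2.trans a1)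
  have e : (13/16 - 3/4) * (3/4 * (C.K ^ 2 / C.P) * (1 / (128 * C.P ^ 4))) =
      C.K ^ 2 * 3 / (8192 * C.P ^ 5) := by field_simp; norm_num
  rw [e, div_le_div_iff₀ (by positivity) (by positivity)]
  have : 8192 ≤ 3 * C.P ^ 2 := by nlinarith [C.hP]
  calc C.K ^ 2 * (8192 * C.P ^ 5) = (C.K ^ 2 * C.P ^ 5) * 8192 := by ring
    _ ≤ (C.K ^ 2 * C.P ^ 5) * (3 * C.P ^ 2) := mul_le_mul_of_nonneg_left this (by positivity)
    _ = _ := by ring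

lemma T0_pos (hx : Adm C x) : 0 < C.T x 0 := by
  have hP := C.P0
  have hK := C.hK
  exact lt_of_lt_of_le (by positivity) (T0_low hx)

lemma inv_T0_le (hx : Adm C x) : (C.T x 0)⁻¹ ≤ C.P ^ 7 / C.K ^ 2 := by
  have hP := C.P0
  have hK := C.hK
  have := inv_anti₀ (by positivity) (T0_low hx)
  rwa [inv_div] at this

lemma inv_T0_sub (hx : Adm C x) (hy : Adm C y) {d : ℝ} (h : Near x y d) :
    |(C.T x 0)⁻¹ - (C.T y 0)⁻¹| ≤ C.P ^ 18 / C.K ^ 2 * d := by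
  have hP := C.P0
  have hK := C.hK
  have hd := h.d0
  have hx0 := T0_pos hx
  have hy0 := T0_pos hy
  have e : (C.T x 0)⁻¹ - (C.T y 0)⁻¹ = (C.T x 0)⁻¹ * (C.T y 0)⁻¹ * (C.T y 0 - C.T x 0) := by
    field_simp
  rw [e, abs_mul, abs_of_nonneg (by positivity), abs_sub_comm]
  calc _ ≤ (C.P ^ 7 / C.K ^ 2) * (C.P ^ 7 / C.K ^ 2) * (C.K ^ 2 * C.P ^ 4 * d) := by
        refine mul_le_mul (mul_le_mul (inv_T0_le hx) (inv_T0_le hy) (by positivity) (by positivity))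
          (T0_sub hx hy h) (abs_nonneg _) (by positivity)
    _ = _ := by field_simp

/-- The part of the normalizing integral before `z`, seen from `z`. -/
noncomputable def B (C : Ctx) (x : (ℝ → ℝ) × ℝ) (z : ℝ) : ℝ := ∫ ξ in (0:ℝ)..z, C.G x z ξ

lemma G_shift (z ξ : ℝ) : C.G x z ξ = Real.exp (C.ex x z 0) * C.G x 0 ξ := by
  unfold G
  rw [← ex_add C x z 0 ξ, Real.exp_add]; ring

/-- Integrals from `z` are rescaled integrals from `0`; in particular `T x` is continuous. -/
lemma T_eq (hx : Adm C x) {z : ℝ} (hz : 0 ≤ z) :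
    C.T x z = Real.exp (C.ex x z 0) * (C.T x 0 - ∫ ξ in (0:ℝ)..z, C.G x 0 ξ) := by
  have h := intervalIntegral.integral_Ioi_sub_Ioi (G0_int hx) hz
  have h1 : C.T x z = Real.exp (C.ex x z 0) * ∫ ξ in Ioi z, C.G x 0 ξ := by
    unfold T
    rw [← integral_const_mul]
    simp_rw [← G_shift]
  rw [h1, ← h]
  unfold T
  ring

/-- Causal form of `U`: the homogeneous solution minus a term with the exponentially small
factor `1 / T x 0`. -/
lemma U_eq (hx : Adm C x) {z : ℝ} (hz : 0 ≤ z) :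
    C.U x z = Real.exp (C.ex x z 0) - (C.T x 0)⁻¹ * B C x z := by
  have hB : B C x z = Real.exp (C.ex x z 0) * ∫ ξ in (0:ℝ)..z, C.G x 0 ξ := by
    unfold B
    rw [← intervalIntegral.integral_const_mul]
    simp_rw [← G_shift]
  have := (T0_pos hx).ne'
  unfold U
  rw [T_eq hx hz, hB]
  field_simp

lemma ex_back (hx : Adm C x) {z ξ : ℝ} (hξ : 0 ≤ ξ) (h : ξ ≤ z) (h1 : z ≤ 1) : C.ex x z ξ ≤ 0 := by
  rw [ex_symm]
  linarith [ex_nn hx hξ h h1]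

lemma mul_W_le_one {ξ : ℝ} (hξ : 0 ≤ ξ) : ξ * W C.β ξ ≤ 1 := by
  refine (mul_W_le_exp _ hξ).trans (Real.exp_le_one_iff.2 ?_)
  have : 0 ≤ C.β := by linarith [C.hβ, C.hc]
  nlinarith [mul_nonneg this hξ]

lemma B_le (hx : Adm C x) {z : ℝ} (hz : 0 ≤ z) (h1 : z ≤ 1) : |B C x z| ≤ C.P ^ 5 := by
  have hP := C.P0
  have := intervalIntegral.norm_integral_le_of_norm_le_const (E := ℝ) (f := C.G x z) (a := 0)
    (b := z) (C := C.P ^ 5) fun ξ hξ => by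
      rw [uIoc_of_le hz] at hξ
      refine (G_le hx hξ.1.le (ex_back hx hξ.1.le hξ.2 h1)).trans ?_
      rw [Real.exp_zero, one_mul]
      exact mul_le_of_le_one_right (by positivity) (mul_W_le_one hξ.1.le)
  refine this.trans (mul_le_of_le_one_right (by positivity) ?_)
  rwa [sub_zero, abs_of_nonneg hz]

lemma B_sub (hx : Adm C x) (hy : Adm C y) {d : ℝ} (h : Near x y d) {z : ℝ} (hz : 0 ≤ z)
    (h1 : z ≤ 1) : |B C x z - B C y z| ≤ C.P ^ 5 * d := by
  have hP := C.P0
  have hd := h.d0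
  unfold B
  rw [← intervalIntegral.integral_sub ((G_cont hx z).intervalIntegrable _ _)
    ((G_cont hy z).intervalIntegrable _ _)]
  have := intervalIntegral.norm_integral_le_of_norm_le_const (E := ℝ)
    (f := fun ξ => C.G x z ξ - C.G y z ξ) (a := 0)
    (b := z) (C := C.P ^ 5 * d) fun ξ hξ => by
      rw [uIoc_of_le hz] at hξ
      refine (G_sub hx hy h hz hξ.1.le (ex_back hx hξ.1.le hξ.2 h1)
        (ex_back hy hξ.1.le hξ.2 h1)).trans ?_
      rw [Real.exp_zero, one_mul]
      have a1 : 1 + |ξ - z| ≤ 2 := by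
        have : |ξ - z| ≤ 1 := by rw [abs_le]; constructor <;> linarith [hξ.1, hξ.2]
        linarith
      have a2 := mul_W_le_one (C := C) hξ.1.le
      calc _ ≤ C.P ^ 4 * d * 1 * 2 := by
            refine mul_le_mul (mul_le_mul_of_nonneg_left a2 (by positivity)) a1 (by positivity)
              (by positivity)
        _ = C.P ^ 4 * d * 2 := by ring
        _ ≤ C.P ^ 4 * d * C.P := mul_le_mul_of_nonneg_left (by linarith [C.hP]) (by positivity)
        _ = _ := by ring
  refine this.trans (mul_le_of_le_one_right (by positivity) ?_)
  rwa [sub_zero, abs_of_nonneg hz]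

/-! ### Self-map, contraction and fixed point -/

lemma pow_div_K_small {n : ℕ} (h : n ≤ 29) : C.P ^ n / C.K ≤ 1 / C.P := by
  simpa using pow_div_K_le (C := C) (n := n) (m := 1) (by omega)

lemma pow_div_K2_small {n : ℕ} (h : n ≤ 29) : C.P ^ n / C.K ^ 2 ≤ 1 / C.P := by
  refine le_trans ?_ (pow_div_K_small (C := C) h)
  have hP := C.P0
  have hK := C.hK
  have := C.K1
  gcongr
  nlinarith

lemma inv_P_le : 1 / C.P ≤ 1 / 4096 :=
  one_div_le_one_div_of_le (by norm_num) C.hP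

lemma om_le_one {z : ℝ} (hz : 0 ≤ z) : om C.β z ≤ 1 := by
  have hβ : 0 ≤ C.β := by linarith [C.hβ, C.hc]
  unfold om
  rw [abs_of_nonneg hz]
  refine div_le_one_of_le₀ ?_ (by linarith)
  have : Real.exp (-C.β * z) ≤ 1 := Real.exp_le_one_iff.2 (by nlinarith [mul_nonneg hβ hz])
  linarith

lemma T_nn (hx : Adm C x) {z : ℝ} (hz : 0 ≤ z) : 0 ≤ C.T x z :=
  setIntegral_nonneg measurableSet_Ioi fun _ (hξ : z < _) => G_nn hx z (hz.trans hξ.le)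

lemma U_nn (hx : Adm C x) {z : ℝ} (hz : 0 ≤ z) : 0 ≤ C.U x z :=
  div_nonneg (T_nn hx hz) (T0_pos hx).le

lemma B_nn (hx : Adm C x) {z : ℝ} (hz : 0 ≤ z) : 0 ≤ B C x z :=
  intervalIntegral.integral_nonneg hz fun _ hξ => G_nn hx z hξ.1

lemma U_le (hx : Adm C x) {z : ℝ} (hz : 0 ≤ z) : C.U x z ≤ C.P * om C.β z := by
  have hP := C.P0
  have hK := C.hK
  have hom := om_pos C.β z
  rcases le_total z 1 with h1 | h1
  · have a1 : C.U x z ≤ 1 := by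
      rw [U_eq hx hz]
      have := Real.exp_le_one_iff.2 (ex_back hx le_rfl hz h1)
      have := mul_nonneg (inv_nonneg.2 (T0_pos hx).le) (B_nn hx hz)
      linarith
    have a2 := inv_om_le (C := C) hz h1
    rw [div_le_iff₀ hP] at a2
    linarith
  · have a1 := (le_abs_self _).trans (T_tail_le hx h1)
    have a2 := inv_T0_le hx
    have a3 : C.P ^ 12 / C.K ^ 2 ≤ 1 / C.P := pow_div_K2_small (by norm_num)
    unfold U
    rw [div_eq_mul_inv]
    calc _ ≤ C.P ^ 5 * om C.β z * (C.P ^ 7 / C.K ^ 2) :=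
          mul_le_mul a1 a2 (inv_nonneg.2 (T0_pos hx).le) (by positivity)
      _ = C.P ^ 12 / C.K ^ 2 * om C.β z := by ring
      _ ≤ _ := by
          refine mul_le_mul_of_nonneg_right (a3.trans ?_) hom.le
          have := inv_P_le (C := C); have := C.hP; linarith

lemma U_low (hx : Adm C x) {z : ℝ} (hz : 5/16 ≤ z) (h2 : z ≤ 7/16) : 1 / C.P ≤ C.U x z := by
  have hP := C.P0
  have hK := C.hK
  have h0 : 0 ≤ z := by linarith
  have h1 : z ≤ 1 := by linarith
  rw [U_eq hx h0]
  have a1 : (C.T x 0)⁻¹ * B C x z ≤ 1 / C.P := by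
    have b1 := (le_abs_self _).trans (B_le hx h0 h1)
    calc _ ≤ C.P ^ 7 / C.K ^ 2 * C.P ^ 5 :=
          mul_le_mul (inv_T0_le hx) b1 (B_nn hx h0) (by positivity)
      _ = C.P ^ 12 / C.K ^ 2 := by ring
      _ ≤ _ := pow_div_K2_small (by norm_num)
  have a2 : 2 / C.P ≤ Real.exp (C.ex x z 0) := by
    have b1 : C.ex x 0 z ≤ C.c := by
      refine (ex_le_int hx le_rfl h0).trans ((int_a_le le_rfl h0 (Or.inl h2)).trans ?_)
      nlinarith [C.hc]
    have b2 : -C.β ≤ C.ex x z 0 := by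
      rw [ex_symm]; linarith [C.hβ]
    refine le_trans ?_ (Real.exp_le_exp.2 b2)
    rw [Real.exp_neg, div_le_iff₀ hP]
    have b3 := C.hPβ
    have b4 := Real.exp_pos C.β
    rw [inv_mul_eq_div, le_div_iff₀ b4]
    exact b3
  have : 2 / C.P = 1 / C.P + 1 / C.P := by ring
  linarith

/-- All differences carry a factor `1 / K`, up to powers of `P`: this is the contraction estimate. -/
lemma U_sub (hx : Adm C x) (hy : Adm C y) {d : ℝ} (h : Near x y d) {z : ℝ} (hz : 0 ≤ z) :
    |C.U x z - C.U y z| ≤ d / 2 * om C.β z := by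
  have hP := C.P0
  have hK := C.hK
  have hd := h.d0
  have hom := om_pos C.β z
  have hs := inv_P_le (C := C)
  have i0 : 0 ≤ (C.T y 0)⁻¹ := inv_nonneg.2 (T0_pos hy).le
  have i1 := inv_T0_le hy
  have i2 := inv_T0_sub hx hy h
  rcases le_total z 1 with h1 | h1
  · have e : C.U x z - C.U y z = (Real.exp (C.ex x z 0) - Real.exp (C.ex y z 0)) -
        ((C.T x 0)⁻¹ - (C.T y 0)⁻¹) * B C x z - (C.T y 0)⁻¹ * (B C x z - B C y z) := by
      rw [U_eq hx hz, U_eq hy hz]; ring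
    have a1 : |Real.exp (C.ex x z 0) - Real.exp (C.ex y z 0)| ≤ C.P ^ 4 / C.K * d := by
      have b := ex_sub hx hy h hz le_rfl
      have b0 : 0 ≤ C.P ^ 4 / C.K * d := by positivity
      have b2 := exp_sub_exp_le (ex_back hx le_rfl hz h1) (ex_back hy le_rfl hz h1)
      rw [Real.exp_zero, one_mul] at b2
      refine b2.trans (b.trans ?_)
      rw [zero_sub, abs_neg, abs_of_nonneg hz]
      nlinarith
    have a2 : |((C.T x 0)⁻¹ - (C.T y 0)⁻¹) * B C x z| ≤ C.P ^ 18 / C.K ^ 2 * d * C.P ^ 5 := by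
      rw [abs_mul]
      exact mul_le_mul i2 (B_le hx hz h1) (abs_nonneg _) (by positivity)
    have a3 : |(C.T y 0)⁻¹ * (B C x z - B C y z)| ≤ C.P ^ 7 / C.K ^ 2 * (C.P ^ 5 * d) := by
      rw [abs_mul, abs_of_nonneg i0]
      exact mul_le_mul i1 (B_sub hx hy h hz h1) (abs_nonneg _) (by positivity)
    have a4 := inv_om_le (C := C) hz h1
    rw [div_le_iff₀ hP] at a4
    have a5 : C.P ^ 5 / C.K ≤ 1 / C.P := pow_div_K_small (by norm_num)
    have a6 : C.P ^ 24 / C.K ^ 2 ≤ 1 / C.P := pow_div_K2_small (by norm_num)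
    have a7 : C.P ^ 13 / C.K ^ 2 ≤ 1 / C.P := pow_div_K2_small (by norm_num)
    have t1 := abs_sub (Real.exp (C.ex x z 0) - Real.exp (C.ex y z 0) -
        ((C.T x 0)⁻¹ - (C.T y 0)⁻¹) * B C x z) ((C.T y 0)⁻¹ * (B C x z - B C y z))
    have t2 := abs_sub (Real.exp (C.ex x z 0) - Real.exp (C.ex y z 0))
        (((C.T x 0)⁻¹ - (C.T y 0)⁻¹) * B C x z)
    rw [e]
    calc _ ≤ C.P ^ 4 / C.K * d + C.P ^ 18 / C.K ^ 2 * d * C.P ^ 5 +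
          C.P ^ 7 / C.K ^ 2 * (C.P ^ 5 * d) := by linarith
      _ ≤ (C.P ^ 4 / C.K * d + C.P ^ 18 / C.K ^ 2 * d * C.P ^ 5 +
          C.P ^ 7 / C.K ^ 2 * (C.P ^ 5 * d)) * (om C.β z * C.P) :=
          le_mul_of_one_le_right (by positivity) a4
      _ = (C.P ^ 5 / C.K + C.P ^ 24 / C.K ^ 2 + C.P ^ 13 / C.K ^ 2) * (d * om C.β z) := by ring
      _ ≤ 1 / 2 * (d * om C.β z) := by
          refine mul_le_mul_of_nonneg_right ?_ (by positivity)
          linarith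
      _ = _ := by ring
  · have e : C.U x z - C.U y z = ((C.T x 0)⁻¹ - (C.T y 0)⁻¹) * C.T x z +
        (C.T y 0)⁻¹ * (C.T x z - C.T y z) := by
      unfold U; ring
    have a2 : |((C.T x 0)⁻¹ - (C.T y 0)⁻¹) * C.T x z| ≤
        C.P ^ 18 / C.K ^ 2 * d * (C.P ^ 5 * om C.β z) := by
      rw [abs_mul]
      exact mul_le_mul i2 (T_tail_le hx h1) (abs_nonneg _) (by positivity)
    have a3 : |(C.T y 0)⁻¹ * (C.T x z - C.T y z)| ≤
        C.P ^ 7 / C.K ^ 2 * (C.P ^ 4 * d * om C.β z) := by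
      rw [abs_mul, abs_of_nonneg i0]
      exact mul_le_mul i1 (T_tail_sub hx hy h h1) (abs_nonneg _) (by positivity)
    have a6 : C.P ^ 23 / C.K ^ 2 ≤ 1 / C.P := pow_div_K2_small (by norm_num)
    have a7 : C.P ^ 11 / C.K ^ 2 ≤ 1 / C.P := pow_div_K2_small (by norm_num)
    rw [e]
    calc _ ≤ C.P ^ 18 / C.K ^ 2 * d * (C.P ^ 5 * om C.β z) +
          C.P ^ 7 / C.K ^ 2 * (C.P ^ 4 * d * om C.β z) :=
          (abs_add_le _ _).trans (add_le_add a2 a3)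
      _ = (C.P ^ 23 / C.K ^ 2 + C.P ^ 11 / C.K ^ 2) * (d * om C.β z) := by ring
      _ ≤ 1 / 2 * (d * om C.β z) := by
          refine mul_le_mul_of_nonneg_right ?_ (by positivity)
          linarith
      _ = _ := by ring

/-- The fixed-point map. The argument is clipped at `0` so that the values are functions on all
of `ℝ`; only `z ≥ 0` is relevant. -/
noncomputable def S (C : Ctx) (x : (ℝ → ℝ) × ℝ) : (ℝ → ℝ) × ℝ :=
  (fun z => C.U x (max z 0) / om C.β (max z 0), C.K / C.T x 0)

lemma S_cont (hx : Adm C x) : Continuous (S C x).1 := by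
  have h0 : ∀ z : ℝ, 0 ≤ max z 0 := fun z => le_max_right _ _
  have e : (S C x).1 = fun z => Real.exp (C.ex x (max z 0) 0) *
      (C.T x 0 - ∫ ξ in (0:ℝ)..max z 0, C.G x 0 ξ) / C.T x 0 / om C.β (max z 0) := by
    funext z
    simp only [S, U]
    rw [T_eq hx (h0 z)]
  rw [e]
  have hm : Continuous fun z : ℝ => max z 0 := continuous_id.max continuous_const
  have h1 := (ex_cont' C x 0).comp hm
  have h2 : Continuous fun z => ∫ ξ in (0:ℝ)..z, C.G x 0 ξ :=
    intervalIntegral.continuous_primitive (fun _ _ => (G_cont hx 0).intervalIntegrable _ _) 0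
  refine Continuous.div (Continuous.div_const (Continuous.mul h1.rexp
    (continuous_const.sub (h2.comp hm))) _) ((om_cont _).comp hm) fun z => (om_pos _ _).ne'

lemma S_adm (hx : Adm C x) : Adm C (S C x) := by
  have hP := C.P0
  have hK := C.hK
  have h0 : ∀ z : ℝ, 0 ≤ max z 0 := fun z => le_max_right _ _
  refine ⟨S_cont hx, fun z => div_nonneg (U_nn hx (h0 z)) (om_pos _ _).le, fun z => ?_,
    fun z h1 h2 => ?_, (div_pos hK (T0_pos hx)).le, ?_⟩
  · exact (div_le_iff₀ (om_pos _ _)).2 (U_le hx (h0 z))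
  · have hz : max z 0 = z := max_eq_left (by linarith)
    simp only [S, hz]
    rw [le_div_iff₀ (om_pos _ _)]
    have b1 := U_low hx h1 h2
    have b2 := om_le_one (C := C) (z := z) (by linarith)
    have b3 : 0 ≤ 1 / C.P := by positivity
    nlinarith
  · simp only [S]
    have a1 := inv_T0_le hx
    calc C.K / C.T x 0 = C.K * (C.T x 0)⁻¹ := div_eq_mul_inv _ _
      _ ≤ C.K * (C.P ^ 7 / C.K ^ 2) := mul_le_mul_of_nonneg_left a1 hK.le
      _ = C.P ^ 7 / C.K := by field_simp
      _ ≤ 1 := pow_div_K_le_one (by norm_num)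

lemma S_near (hx : Adm C x) (hy : Adm C y) {d : ℝ} (h : Near x y d) :
    Near (S C x) (S C y) (d / 2) := by
  have hP := C.P0
  have hK := C.hK
  have hd := h.d0
  refine ⟨by linarith, fun z => ?_, ?_⟩
  · have hom := om_pos C.β (max z 0)
    simp only [S]
    rw [← sub_div, abs_div, abs_of_pos hom, div_le_iff₀ hom]
    exact U_sub hx hy h (le_max_right _ _)
  · simp only [S]
    rw [div_eq_mul_inv, div_eq_mul_inv, ← mul_sub, abs_mul, abs_of_pos hK]
    have a1 : C.P ^ 18 / C.K ≤ 1 / C.P := pow_div_K_small (by norm_num)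
    have a2 := inv_P_le (C := C)
    calc _ ≤ C.K * (C.P ^ 18 / C.K ^ 2 * d) :=
          mul_le_mul_of_nonneg_left (inv_T0_sub hx hy h) hK.le
      _ = C.P ^ 18 / C.K * d := by field_simp
      _ ≤ 1 / 2 * d := by
          refine mul_le_mul_of_nonneg_right ?_ hd
          linarith
      _ = _ := by ring

open BoundedContinuousFunction in
/-- Banach's fixed-point theorem on the admissible pairs, a closed subset of `(ℝ →ᵇ ℝ) × ℝ`. -/
theorem exists_fixed (C : Ctx) : ∃ x, Adm C x ∧
    (∀ z, 0 ≤ z → om C.β z * x.1 z = C.U x z) ∧ x.2 = C.K / C.T x 0 := by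
  have hP := C.P0
  let E := (ℝ →ᵇ ℝ) × ℝ
  let pt : E → (ℝ → ℝ) × ℝ := fun q => (⇑q.1, q.2)
  let D : Set E := {q | Adm C (pt q)}
  have hev : ∀ z : ℝ, Continuous fun q : E => q.1 z := fun z =>
    (continuous_eval_const z).comp continuous_fst
  have hD : IsClosed D := by
    have : D = {q : E | (∀ z, 0 ≤ q.1 z) ∧ (∀ z, q.1 z ≤ C.P) ∧
        (∀ z, 5/16 ≤ z → z ≤ 7/16 → 1 / C.P ≤ q.1 z) ∧ 0 ≤ q.2 ∧ q.2 ≤ 1} := by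
      ext q
      exact ⟨fun h => ⟨h.nn, h.le, h.low, h.s0, h.s1⟩,
        fun h => ⟨q.1.continuous, h.1, h.2.1, h.2.2.1, h.2.2.2.1, h.2.2.2.2⟩⟩
    rw [this]
    refine IsClosed.and ?_ (IsClosed.and ?_ (IsClosed.and ?_ (IsClosed.and ?_ ?_)))
    · simp only [ofPred_forall]
      exact isClosed_iInter fun z => isClosed_le continuous_const (hev z)
    · simp only [ofPred_forall]
      exact isClosed_iInter fun z => isClosed_le (hev z) continuous_const
    · simp only [ofPred_forall]
      exact isClosed_iInter fun z => isClosed_iInter fun _ => isClosed_iInter fun _ =>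
        isClosed_le continuous_const (hev z)
    · exact isClosed_le continuous_const continuous_snd
    · exact isClosed_le continuous_snd continuous_const
  have : CompleteSpace D := hD.completeSpace_coe
  have hne : Nonempty D := ⟨⟨(BoundedContinuousFunction.const ℝ C.P, 0),
    ⟨continuous_const, fun _ => hP.le, fun _ => le_rfl, fun _ _ _ =>
      (inv_P_le (C := C)).trans (by have := C.hP; show _ ≤ C.P; linarith), le_rfl, zero_le_one⟩⟩⟩
  let F : D → D := fun q =>
    ⟨(BoundedContinuousFunction.ofNormedAddCommGroup (S C (pt q)).1 (S_adm q.2).cont C.P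
        (fun z => by
          rw [Real.norm_eq_abs, abs_of_nonneg ((S_adm q.2).nn z)]; exact (S_adm q.2).le z),
      (S C (pt q)).2), S_adm q.2⟩
  have hF : ContractingWith (1/2) F := by
    refine ⟨by norm_num, LipschitzWith.of_dist_le_mul fun p q => ?_⟩
    have hn : Near (pt p) (pt q) (dist p q) := by
      have h : dist p q = max (dist p.1.1 q.1.1) (dist p.1.2 q.1.2) := rfl
      refine ⟨dist_nonneg, fun z => ?_, ?_⟩
      · exact (BoundedContinuousFunction.dist_coe_le_dist z).trans (h ▸ le_max_left _ _)
      · exact h ▸ le_max_right _ _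
    have h2 := S_near p.2 q.2 hn
    have h : dist (F p) (F q) = max (dist (F p).1.1 (F q).1.1) (dist (F p).1.2 (F q).1.2) := rfl
    rw [h]
    have e : ((1/2 : NNReal) : ℝ) * dist p q = dist p q / 2 := by
      push_cast; ring
    rw [e]
    refine max_le ?_ h2.s
    exact (BoundedContinuousFunction.dist_le h2.d0).2 fun z => h2.g z
  obtain ⟨q, hq⟩ : ∃ q, F q = q := ⟨_, hF.fixedPoint_isFixedPt⟩
  have hS : S C (pt q) = pt q := by
    have h1 := congrArg (fun r : D => pt r.1) hq
    exact h1
  refine ⟨pt q, q.2, fun z hz => ?_, ?_⟩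
  · have h1 : (S C (pt q)).1 z = (pt q).1 z := by rw [hS]
    rw [← h1]
    simp only [S, max_eq_left hz]
    have := (om_pos C.β z).ne'
    field_simp
  · have h1 : (S C (pt q)).2 = (pt q).2 := by rw [hS]
    exact h1.symm

end Ctx

/-! ### The concrete coefficient `a_δ` -/

/-- The denominator `1 + z - (λ_LSW - δ) z^(1/3)` of `a_δ`. -/
noncomputable def Fd (δ z : ℝ) : ℝ := 1 + z - (lamLSW - δ) * z ^ ((1:ℝ)/3)

/-- The double root, in the variable `z^(1/3)`, of the denominator of `a_0`. -/
noncomputable def kk : ℝ := (1/2 : ℝ) ^ ((1:ℝ)/3)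

lemma rpow_third_pow {z : ℝ} (hz : 0 ≤ z) : (z ^ ((1:ℝ)/3)) ^ 3 = z := by
  rw [← Real.rpow_natCast, ← Real.rpow_mul hz]; norm_num

lemma kk_cube : kk ^ 3 = 1/2 := rpow_third_pow (by norm_num)

lemma kk_low : 0.79 < kk := by
  refine lt_of_pow_lt_pow_left₀ 3 (Real.rpow_nonneg (by norm_num) _) ?_
  rw [kk_cube]; norm_num

lemma kk_up : kk < 0.8 := by
  refine lt_of_pow_lt_pow_left₀ 3 (by norm_num) ?_
  rw [kk_cube]; norm_num

lemma lam_eq : lamLSW = 3 * kk ^ 2 := by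
  unfold lamLSW kk
  rw [← Real.rpow_natCast, ← Real.rpow_mul (by norm_num)]; norm_num

/-- In the variable `v = z^(1/3)` the denominator is `(v - k)² (v + 2k) + δ v`, hence at `δ = 0` it
has a double root at `z = k³ = 1/2`. -/
lemma Fd_eq (δ : ℝ) {z : ℝ} (hz : 0 ≤ z) : Fd δ z =
    (z ^ ((1:ℝ)/3) - kk) ^ 2 * (z ^ ((1:ℝ)/3) + 2 * kk) + δ * z ^ ((1:ℝ)/3) := by
  have h1 := rpow_third_pow hz
  have h2 := kk_cube
  have e : Fd δ z = 1 + z - (lamLSW - δ) * z ^ ((1:ℝ)/3) := rfl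
  rw [e, lam_eq]
  generalize z ^ ((1:ℝ)/3) = v at *
  rw [← h1]
  linear_combination -2 * h2

lemma Fd_low {δ z : ℝ} (hδ : 0 < δ) (hδ1 : δ ≤ 1) (hz : 0 ≤ z) : δ * (1 + z) / 40 ≤ Fd δ z := by
  rw [Fd_eq δ hz]
  have h1 := rpow_third_pow hz
  have hv : 0 ≤ z ^ ((1:ℝ)/3) := Real.rpow_nonneg hz _
  generalize z ^ ((1:ℝ)/3) = v at *
  have k1 := kk_low
  have k2 := kk_up
  rw [← h1]
  have hv3 : 0 ≤ v ^ 3 := by positivity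
  rcases le_total v (1/2) with h | h
  · have a1 : (0.29:ℝ) ^ 2 ≤ (v - kk) ^ 2 := by nlinarith
    have a2 : (0.29:ℝ) ^ 2 * 1.58 ≤ (v - kk) ^ 2 * (v + 2 * kk) :=
      mul_le_mul a1 (by linarith) (by norm_num) (by positivity)
    have a3 : v ^ 3 ≤ (1/2) ^ 3 := by gcongr
    have a4 : 0 ≤ δ * v := by positivity
    have a5 : δ * (1 + v ^ 3) ≤ 1 * (1 + (1/2) ^ 3) := by gcongr
    norm_num at a2 a5
    linarith
  · rcases le_total v 1 with h' | h'
    · have a1 : 0 ≤ (v - kk) ^ 2 * (v + 2 * kk) := by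
        have : 0 ≤ v + 2 * kk := by linarith
        positivity
      have a3 : v ^ 3 ≤ 1 ^ 3 := by gcongr
      have a4 : δ * (1 + v ^ 3) ≤ δ * (1 + 1 ^ 3) := by gcongr
      nlinarith
    · have a1 : (v / 5) ^ 2 ≤ (v - kk) ^ 2 := by
        apply pow_le_pow_left₀ (by positivity); linarith
      have a2 : (v / 5) ^ 2 * (v + 1.58) ≤ (v - kk) ^ 2 * (v + 2 * kk) :=
        mul_le_mul a1 (by linarith) (by linarith) (by positivity)
      have a4 : 0 ≤ δ * v := by positivity
      have a5 : δ * (1 + v ^ 3) ≤ 1 * (1 + v ^ 3) := by gcongr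
      have a6 : 1 ≤ v ^ 2 := by nlinarith
      nlinarith

lemma Fd_pos {δ z : ℝ} (hδ : 0 < δ) (hδ1 : δ ≤ 1) (hz : 0 ≤ z) : 0 < Fd δ z :=
  lt_of_lt_of_le (by positivity) (Fd_low hδ hδ1 hz)

/-- Away from the near-double root at `z = 1/2` the denominator is bounded below uniformly
in `δ`. -/
lemma Fd_away {δ z : ℝ} (hδ : 0 < δ) (hz : 0 ≤ z) (h : z ≤ 7/16 ∨ 3/4 ≤ z) :
    1/1000 ≤ Fd δ z := by
  rw [Fd_eq δ hz]
  have h1 := rpow_third_pow hz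
  have hv : 0 ≤ z ^ ((1:ℝ)/3) := Real.rpow_nonneg hz _
  generalize z ^ ((1:ℝ)/3) = v at *
  have k1 := kk_low
  have k2 := kk_up
  rw [← h1] at h
  have a1 : (0.03:ℝ) ^ 2 ≤ (v - kk) ^ 2 := by
    rcases h with h | h
    · have : v < 0.76 := by
        refine lt_of_pow_lt_pow_left₀ 3 (by norm_num) (h.trans_lt ?_)
        norm_num
      nlinarith
    · have : 0.9 < v := by
        refine lt_of_pow_lt_pow_left₀ 3 hv (lt_of_lt_of_le ?_ h)
        norm_num
      nlinarith
  have a2 : (0.03:ℝ) ^ 2 * 1.58 ≤ (v - kk) ^ 2 * (v + 2 * kk) :=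
    mul_le_mul a1 (by linarith) (by norm_num) (by positivity)
  have a4 : 0 ≤ δ * v := by positivity
  norm_num at a2
  linarith

lemma Fd_le_two {δ z : ℝ} (hδ1 : δ ≤ 1) (hz : 0 ≤ z) (h : z ≤ 1) : Fd δ z ≤ 2 := by
  have e : Fd δ z = 1 + z - (lamLSW - δ) * z ^ ((1:ℝ)/3) := rfl
  have hv : 0 ≤ z ^ ((1:ℝ)/3) := Real.rpow_nonneg hz _
  have k1 := kk_low
  rw [e, lam_eq]
  have : 0 ≤ (3 * kk ^ 2 - δ) * z ^ ((1:ℝ)/3) := mul_nonneg (by nlinarith) hv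
  linarith

/-- The denominator is of size `δ` on an interval of length `√δ` to the right of `z = 1/2`. -/
lemma Fd_near {δ z : ℝ} (hδ : 0 < δ) (h1 : 1/2 ≤ z) (h2 : z ≤ 1/2 + Real.sqrt δ) (hz1 : z ≤ 1) :
    Fd δ z ≤ 2 * δ := by
  have hz : 0 ≤ z := by linarith
  rw [Fd_eq δ hz]
  have hc := rpow_third_pow hz
  have hv : 0 ≤ z ^ ((1:ℝ)/3) := Real.rpow_nonneg hz _
  have hs := Real.sq_sqrt hδ.le
  have hs0 := Real.sqrt_nonneg δ
  generalize z ^ ((1:ℝ)/3) = v at *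
  generalize Real.sqrt δ = s at *
  have k1 := kk_low
  have k2 := kk_up
  have k3 := kk_cube
  have hv1 : v ≤ 1 := by
    refine le_of_pow_le_pow_left₀ (n := 3) (by norm_num) (by norm_num) ?_
    rw [hc]; linarith
  have hvk : kk ≤ v := by
    refine le_of_pow_le_pow_left₀ (n := 3) (by norm_num) hv ?_
    rw [hc, k3]; exact h1
  have a1 : (v - kk) * (v ^ 2 + v * kk + kk ^ 2) ≤ s := by
    have : (v - kk) * (v ^ 2 + v * kk + kk ^ 2) = v ^ 3 - kk ^ 3 := by ring
    rw [this, hc, k3]; linarith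
  have a2 : 1.8 ≤ v ^ 2 + v * kk + kk ^ 2 := by nlinarith
  have a3 : (v - kk) * 1.8 ≤ s :=
    (mul_le_mul_of_nonneg_left a2 (by linarith)).trans a1
  have a4 : ((v - kk) * 1.8) ^ 2 ≤ s ^ 2 := pow_le_pow_left₀ (by nlinarith) a3 2
  have a5 : (v - kk) ^ 2 * (v + 2 * kk) ≤ (v - kk) ^ 2 * 2.6 :=
    mul_le_mul_of_nonneg_left (by linarith) (sq_nonneg _)
  have a6 : δ * v ≤ δ := by nlinarith
  norm_num at a4 a5
  nlinarith

lemma aF_eq (δ z : ℝ) : aF δ z = 1 / Fd δ z := rfl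

/-- `a_δ`, extended to the left of `0` by its value at `0`. -/
noncomputable def aa (δ z : ℝ) : ℝ := aF δ (max z 0)

lemma aa_eq {δ z : ℝ} (hz : 0 ≤ z) : aa δ z = 1 / Fd δ z := by
  unfold aa; rw [max_eq_left hz, aF_eq]

lemma Fd_cont (δ : ℝ) : Continuous (Fd δ) := by
  have := Real.continuous_rpow_const (q := (1:ℝ)/3) (by norm_num)
  unfold Fd
  fun_prop

lemma aa_cont {δ : ℝ} (hδ : 0 < δ) (hδ1 : δ ≤ 1) : Continuous (aa δ) := by
  have : aa δ = fun z => 1 / Fd δ (max z 0) := rfl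
  rw [this]
  exact continuous_const.div ((Fd_cont δ).comp (continuous_id.max continuous_const))
    fun z => (Fd_pos hδ hδ1 (le_max_right _ _)).ne'

/-- The peak of `a_δ`, of height `1/δ` and width `√δ`, has mass at least of order `1/√δ`. -/
lemma int_aa_low {δ : ℝ} (hδ : 0 < δ) (hδ1 : δ ≤ 1/4) :
    1 / (2 * Real.sqrt δ) ≤ ∫ y in (0:ℝ)..1, aa δ y := by
  have hs0 : 0 < Real.sqrt δ := Real.sqrt_pos.2 hδ
  have hs : Real.sqrt δ ≤ 1/2 := by
    rw [Real.sqrt_le_left (by norm_num)]; linarith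
  have hδ' : δ ≤ 1 := by linarith
  have hc := aa_cont hδ hδ'
  have hi : ∀ u v, IntervalIntegrable (aa δ) volume u v := fun u v => hc.intervalIntegrable u v
  have hn : ∀ z : ℝ, 0 ≤ aa δ z := fun z => by
    have := Fd_pos hδ hδ' (le_max_right z 0)
    show 0 ≤ 1 / Fd δ (max z 0)
    positivity
  have a1 : ∫ y in (1/2:ℝ)..(1/2 + Real.sqrt δ), aa δ y ≤ ∫ y in (0:ℝ)..1, aa δ y :=
    intervalIntegral.integral_mono_interval (by norm_num) (by linarith) (by linarith)
      (Eventually.of_forall fun z => hn z) (hi _ _)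
  have a2 : ∫ _ in (1/2:ℝ)..(1/2 + Real.sqrt δ), 1 / (2 * δ) ≤
      ∫ y in (1/2:ℝ)..(1/2 + Real.sqrt δ), aa δ y := by
    refine intervalIntegral.integral_mono_on (by linarith)
      (continuous_const.intervalIntegrable _ _) (hi _ _) fun z hz => ?_
    have h0 : 0 ≤ z := by linarith [hz.1]
    rw [aa_eq h0]
    exact one_div_le_one_div_of_le (Fd_pos hδ hδ' h0)
      (Fd_near hδ hz.1 hz.2 (by linarith [hz.2]))
  refine le_trans (le_of_eq ?_) (a2.trans a1)
  rw [intervalIntegral.integral_const, smul_eq_mul]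
  have := Real.sq_sqrt hδ.le
  have e : δ = Real.sqrt δ * Real.sqrt δ := by rw [← sq]; exact this.symm
  rw [add_sub_cancel_left]
  nth_rewrite 3 [e]
  field_simp

/-- For small `δ` the coefficient `a_δ` satisfies the abstract hypotheses. The large parameter `P`
is a multiple of `1/δ`, whereas `K ≥ exp (1 / (4 √δ))`. -/
lemma exists_ctx {β₁ : ℝ} (hβ₁ : 0 < β₁) : ∃ δ₀ : ℝ, 0 < δ₀ ∧ δ₀ ≤ 1/4 ∧ ∀ δ, 0 < δ → δ ≤ δ₀ →
    ∃ C : Ctx, C.a = aa δ ∧ β₁ + 1 ≤ C.β ∧ 1 / C.P ≤ δ := by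
  set β : ℝ := 1002 + β₁ with hβ
  set D : ℝ := max 4096 (2 * Real.exp β) with hD
  have hD1 : 4096 ≤ D := le_max_left _ _
  have hD2 : 2 * Real.exp β ≤ D := le_max_right _ _
  -- In terms of `t = 1/√δ`, the requirement `P ^ 30 ≤ K` follows from `D ^ 30 t ^ 60 ≤ exp (t / 4)`.
  have hlim : Tendsto (fun t : ℝ => t ^ 60 / Real.exp (1/4 * t)) atTop (nhds 0) := by
    have := Real.tendsto_pow_mul_exp_neg_atTop_nhds_zero 60
    have h2 := (this.comp (tendsto_id.const_mul_atTop (by norm_num : (0:ℝ) < 1/4))).const_mul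
      ((4:ℝ)^60)
    rw [mul_zero] at h2
    refine h2.congr fun t => ?_
    simp only [Function.comp, id]
    rw [Real.exp_neg, mul_pow]
    field_simp
  have hev := hlim.eventually (gt_mem_nhds (by positivity : 0 < 1 / D ^ 30))
  obtain ⟨t₀, ht₀⟩ := eventually_atTop.1 hev
  set t₁ := max t₀ 2 with ht₁
  have ht2 : 2 ≤ t₁ := le_max_right _ _
  refine ⟨1 / t₁ ^ 2, by positivity, ?_, fun δ hδ hδt => ?_⟩
  · exact one_div_le_one_div_of_le (by norm_num) (by nlinarith)
  have hδ4 : δ ≤ 1/4 := hδt.trans (one_div_le_one_div_of_le (by norm_num) (by nlinarith))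
  have hδ1 : δ ≤ 1 := by linarith
  have hs0 : 0 < Real.sqrt δ := Real.sqrt_pos.2 hδ
  have hsq := Real.sq_sqrt hδ.le
  have hst : Real.sqrt δ ≤ 1 / t₁ := by
    rw [Real.sqrt_le_left (by positivity), div_pow, one_pow]; exact hδt
  have htt : t₀ ≤ 1 / Real.sqrt δ := by
    refine (le_max_left t₀ 2).trans ?_
    rw [le_div_iff₀ hs0]
    rwa [le_div_iff₀ (by positivity), mul_comm] at hst
  have hbig := ht₀ _ htt
  have hA := int_aa_low hδ hδ4
  set A := ∫ y in (0:ℝ)..1, aa δ y with hAdef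
  have hPδ : D ≤ D / δ := le_div_self (by linarith) hδ hδ1
  refine ⟨{ a := aa δ, β := β, c := 1000, P := D / δ, K := Real.exp (A / 2)
            cont := aa_cont hδ hδ1
            pos := fun z => ?_
            aP := fun z hz => ?_
            ac := fun z hz h => ?_
            ah := fun z hz h => ?_
            hc := by norm_num
            hβ := by rw [hβ]; linarith
            hP := hD1.trans hPδ
            hPβ := hD2.trans hPδ
            hK := Real.exp_pos _
            hKA := ?_
            big := ?_ }, rfl, ?_, ?_⟩
  · exact one_div_pos.2 (Fd_pos hδ hδ1 (le_max_right _ _))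
  · have h1 := Fd_low hδ hδ1 hz
    have h2 := Fd_pos hδ hδ1 hz
    rw [aa_eq hz, one_div_mul_eq_div, div_le_div_iff₀ h2 hδ]
    nlinarith
  · rw [aa_eq hz]
    have h1 := one_div_le_one_div_of_le (by norm_num) (Fd_away hδ hz h)
    simpa using h1
  · rw [aa_eq hz]
    exact one_div_le_one_div_of_le (Fd_pos hδ hδ1 hz) (Fd_le_two hδ1 hz h)
  · rw [← Real.exp_nat_mul]; congr 1; push_cast; ring
  · have e1 : (D / δ) ^ 30 = D ^ 30 * (1 / Real.sqrt δ) ^ 60 := by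
      nth_rewrite 1 [← hsq]
      field_simp
    rw [e1]
    rw [div_lt_div_iff₀ (Real.exp_pos _) (by positivity), one_mul, mul_comm] at hbig
    refine hbig.le.trans (Real.exp_le_exp.2 ?_)
    have : 1 / 4 * (1 / Real.sqrt δ) = 1 / (2 * Real.sqrt δ) / 2 := by ring
    rw [this]; linarith
  · show β₁ + 1 ≤ β
    rw [hβ]; linarith
  · show 1 / (D / δ) ≤ δ
    rw [one_div_div]
    exact div_le_self hδ.le (by linarith)

/-! ### Identification of `ψ` -/

/-- The relation `b_δ = 1 + F'` for `F = 1 / a_δ`, in logarithmic form. -/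
lemma hasDeriv_logFd {δ z : ℝ} (hδ : 0 < δ) (hδ1 : δ ≤ 1) (hz : 0 < z) :
    HasDerivAt (fun t => Real.log (Fd δ t)) (aF δ z * (bF δ z - 1)) z := by
  have h1 : HasDerivAt (fun t : ℝ => t ^ ((1:ℝ)/3)) ((1/3) * z ^ ((1:ℝ)/3 - 1)) z :=
    Real.hasDerivAt_rpow_const (Or.inl hz.ne')
  have h2 : HasDerivAt (Fd δ) (0 + 1 - (lamLSW - δ) * ((1/3) * z ^ ((1:ℝ)/3 - 1))) z :=
    ((hasDerivAt_const z (1:ℝ)).add (hasDerivAt_id z)).sub (h1.const_mul _)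
  have h3 := h2.log (Fd_pos hδ hδ1 hz.le).ne'
  refine h3.congr_deriv ?_
  have e : (1:ℝ)/3 - 1 = -2/3 := by norm_num
  rw [e, aF_eq]
  unfold bF
  ring

namespace Ctx
variable {C : Ctx} {x : (ℝ → ℝ) × ℝ}

/-- Since `b_δ = 1 + F'` with `F = 1 / a_δ`, the function `ψ` has a closed form up to the bounded
coefficient `1 - ε - ε̃ y`. -/
lemma psi0_eq {δ : ℝ} (hδ : 0 < δ) (hδ1 : δ ≤ 1) (hC : C.a = aa δ) {z : ℝ} (hz : 0 ≤ z) :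
    psi0 δ (C.eps x) (C.ept x) z = C.a z * Real.exp (-C.ex x 0 z) := by
  have hpos : ∀ t ∈ Icc 0 z, 0 < Fd δ t := fun t ht => Fd_pos hδ hδ1 ht.1
  have haF : ∀ t, 0 ≤ t → C.a t = aF δ t := fun t ht => by rw [hC, aa_eq ht, aF_eq]
  have hint : IntervalIntegrable (fun t => C.a t * (bF δ t - 1)) volume 0 z := by
    refine IntervalIntegrable.continuousOn_mul ?_ C.cont.continuousOn
    refine IntervalIntegrable.sub (IntervalIntegrable.sub intervalIntegrable_const ?_)
      intervalIntegrable_const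
    exact (intervalIntegral.intervalIntegrable_rpow' (by norm_num)).const_mul _
  have h1 : ∫ t in (0:ℝ)..z, C.a t * (bF δ t - 1) = Real.log (Fd δ z) - Real.log (Fd δ 0) := by
    refine intervalIntegral.integral_eq_sub_of_hasDerivAt_of_le hz
      ((Fd_cont δ).continuousOn.log fun t ht => (hpos t ht).ne') (fun t ht => ?_) hint
    rw [haF t ht.1.le]
    exact hasDeriv_logFd hδ hδ1 ht.1
  have hF0 : Fd δ 0 = 1 := by
    unfold Fd; rw [Real.zero_rpow (by norm_num)]; ring
  have h2 : ∫ t in (0:ℝ)..z, aF δ t * (bF δ t - C.ept x * t - C.eps x) =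
      C.ex x 0 z + Real.log (Fd δ z) := by
    have e : ∫ t in (0:ℝ)..z, aF δ t * (bF δ t - C.ept x * t - C.eps x) =
        ∫ t in (0:ℝ)..z, ((1 - C.eps x - C.ept x * t) * C.a t + C.a t * (bF δ t - 1)) := by
      refine intervalIntegral.integral_congr fun t ht => ?_
      rw [uIcc_of_le hz] at ht
      rw [haF t ht.1]; ring
    rw [e, intervalIntegral.integral_add ((ei_cont C x).intervalIntegrable _ _) hint, h1, hF0,
      Real.log_one, sub_zero]
    rfl
  have hFz := hpos z ⟨hz, le_rfl⟩
  unfold psi0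
  rw [h2, neg_add, Real.exp_add, Real.exp_neg (Real.log _), Real.exp_log hFz, hC, aa_eq hz]
  ring

lemma psi_ratio {δ : ℝ} (hδ : 0 < δ) (hδ1 : δ ≤ 1) (hC : C.a = aa δ) {z ξ : ℝ} (hz : 0 ≤ z)
    (hξ : 0 ≤ ξ) : psi δ (C.eps x) (C.ept x) z / psi δ (C.eps x) (C.ept x) ξ =
      C.a z / C.a ξ * Real.exp (C.ex x z ξ) := by
  have hN : 0 < ∫ t in (0:ℝ)..1, t * psi0 δ (C.eps x) (C.ept x) t := by
    have e : ∫ t in (0:ℝ)..1, t * psi0 δ (C.eps x) (C.ept x) t =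
        ∫ t in (0:ℝ)..1, t * (C.a t * Real.exp (-C.ex x 0 t)) := by
      refine intervalIntegral.integral_congr fun t ht => ?_
      rw [uIcc_of_le zero_le_one] at ht
      rw [psi0_eq hδ hδ1 hC ht.1]
    rw [e]
    refine intervalIntegral.intervalIntegral_pos_of_pos_on ?_ (fun t ht => ?_) zero_lt_one
    · exact (continuous_id.mul (C.cont.mul (ex_cont C x 0).neg.rexp)).intervalIntegrable _ _
    · exact mul_pos ht.1 (mul_pos (C.pos t) (Real.exp_pos _))
  unfold psi
  rw [div_div_div_cancel_right₀ hN.ne', psi0_eq hδ hδ1 hC hz, psi0_eq hδ hδ1 hC hξ,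
    mul_div_mul_comm, ← Real.exp_sub, ← ex_add C x z 0 ξ, ex_symm C x z 0]
  congr 2
  ring

/-! ### Conclusion -/

lemma int_Th_pos (hx : Adm C x) {w : ℝ → ℝ} (hw : Continuous w) (hw0 : ∀ z, 0 < z → 0 < w z)
    (hi : IntegrableOn (fun z => w z * C.Th x z) (Ioi 0)) :
    0 < ∫ z in Ioi (0:ℝ), w z * C.Th x z := by
  have hP := C.P0
  have a1 : ∫ z in Ioc (5/16:ℝ) (7/16), w z * C.Th x z ≤ ∫ z in Ioi (0:ℝ), w z * C.Th x z := by
    refine setIntegral_mono_set hi ?_ (LE.le.eventuallyLE ?_)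
    · filter_upwards [ae_restrict_mem measurableSet_Ioi] with z hz
      exact mul_nonneg (hw0 z hz).le (Th_nn hx z)
    · intro z hz; exact lt_trans (by norm_num) hz.1
  rw [← intervalIntegral.integral_of_le (by norm_num)] at a1
  refine lt_of_lt_of_le ?_ a1
  refine intervalIntegral.intervalIntegral_pos_of_pos_on
    ((hw.mul (Th_cont hx)).intervalIntegrable _ _) (fun t ht => ?_) (by norm_num)
  exact mul_pos (hw0 t (lt_trans (by norm_num) ht.1))
    (lt_of_lt_of_le (by positivity) (Th_low hx ht.1.le ht.2.le))

lemma m0_pos (hx : Adm C x) : 0 < C.m0 x := by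
  have := int_Th_pos (w := fun _ => 1) hx continuous_const (fun _ _ => one_pos)
    (by simpa using Th_int hx)
  simpa [m0] using this

lemma m1_pos (hx : Adm C x) : 0 < C.m1 x :=
  int_Th_pos hx continuous_id (fun _ h => h) (zTh_int hx)

/-- The profile associated with `x`, normalised to have unit first moment. -/
noncomputable def Ph (C : Ctx) (x : (ℝ → ℝ) × ℝ) (z : ℝ) : ℝ := C.Th x z / C.m1 x

lemma conv_Ph (ξ : ℝ) : conv (Ph C x) (Ph C x) ξ = C.hh x ξ / C.m1 x ^ 2 := by
  have e : ∀ y, Ph C x (ξ - y) * Ph C x y = C.Th x (ξ - y) * C.Th x y / C.m1 x ^ 2 := fun y => by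
    unfold Ph; rw [div_mul_div_comm, sq]
  unfold hh conv
  simp_rw [e]
  rw [intervalIntegral.integral_div, mul_div_assoc]

lemma rpow_le_exp {b z : ℝ} (hz : 1 ≤ z) :
    z ^ b ≤ (⌈b⌉₊).factorial * Real.exp z := by
  have h1 : z ^ b ≤ z ^ (⌈b⌉₊ : ℝ) := Real.rpow_le_rpow_of_exponent_le hz (Nat.le_ceil b)
  have h2 := Real.pow_div_factorial_le_exp z (by linarith) ⌈b⌉₊
  rw [div_le_iff₀ (by positivity)] at h2
  rw [Real.rpow_natCast] at h1
  linarith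

lemma Ph_memZ {β₁ β₂ : ℝ} (hβ : β₁ + 1 ≤ C.β) (hx : Adm C x) : memZ β₁ β₂ (Ph C x) := by
  have hP := C.P0
  have hm := m1_pos hx
  have hc : Continuous (Ph C x) := (Th_cont hx).div_const _
  refine ⟨hc.measurable, (isCompact_Icc.image hc.abs).bddAbove,
    C.P ^ 2 / C.m1 x * (⌈β₂⌉₊).factorial, ?_⟩
  rintro _ ⟨z, hz, rfl⟩
  have hz1 : 1 ≤ z := hz
  have hz0 : 0 ≤ z := by linarith
  have a1 : |Ph C x z| ≤ C.P ^ 2 / C.m1 x * Real.exp (-C.β * z) := by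
    have h1 : 0 ≤ Ph C x z := div_nonneg (Th_nn hx z) hm.le
    rw [abs_of_nonneg h1]
    unfold Ph
    rw [div_mul_eq_mul_div]
    gcongr
    exact (Th_le hx hz0).trans (mul_le_mul_of_nonneg_left (W_le_exp _ hz0) (by positivity))
  have a2 := rpow_le_exp (b := β₂) hz1
  have a3 : 0 ≤ z ^ β₂ := Real.rpow_nonneg hz0 _
  calc |Ph C x z| * Real.exp (β₁ * z) * z ^ β₂
      ≤ C.P ^ 2 / C.m1 x * Real.exp (-C.β * z) * Real.exp (β₁ * z) *
        ((⌈β₂⌉₊).factorial * Real.exp z) := by gcongr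
    _ = C.P ^ 2 / C.m1 x * (⌈β₂⌉₊).factorial * Real.exp (-C.β * z + β₁ * z + z) := by
        rw [Real.exp_add, Real.exp_add]; ring
    _ ≤ _ := by
        refine mul_le_of_le_one_right (by positivity) (Real.exp_le_one_iff.2 ?_)
        nlinarith

end Ctx
end LSWE

/-- existence of an exponentially decaying self-similar profile. -/
theorem stmt0 (β₁ β₂ : ℝ) (hβ₁ : 0 < β₁) (hβ₂ : 1 < β₂) :
    ∃ δ₀ : ℝ, 0 < δ₀ ∧ ∀ δ ∈ Ioc (0:ℝ) δ₀,
      ∃ ε εt : ℝ, 0 < ε ∧ ε ≤ Real.sqrt δ ∧ 0 < εt ∧ εt ≤ Real.sqrt δ ∧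
        ∃ Φ : ℝ → ℝ, memZ β₁ β₂ Φ ∧ (∀ z, 0 ≤ z → 0 ≤ Φ z) ∧
          (∀ z, 0 ≤ z →
            Φ z = ε * ∫ ξ in Ioi z, ξ * aF δ ξ * (psi δ ε εt z / psi δ ε εt ξ) * conv Φ Φ ξ) ∧
          (∫ z in Ioi (0:ℝ), z * Φ z) = 1 ∧
          ε * (∫ z in Ioi (0:ℝ), Φ z) = εt := by
  obtain ⟨δ₀, h0, h4, H⟩ := LSWE.exists_ctx hβ₁
  refine ⟨δ₀, h0, fun δ hδ => ?_⟩
  obtain ⟨C, hC, hβ, hPδ⟩ := H δ hδ.1 hδ.2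
  have hδ0 := hδ.1
  have hδ1 : δ ≤ 1 := by linarith [hδ.2]
  obtain ⟨x, hx, hU, hs⟩ := LSWE.Ctx.exists_fixed C
  have hP := C.P0
  have hK := C.hK
  have hT := LSWE.Ctx.T0_pos hx
  have hm0 := LSWE.Ctx.m0_pos hx
  have hm1 := LSWE.Ctx.m1_pos hx
  have hs0 : 0 < x.2 / C.K := by rw [hs]; positivity
  have hsmall : C.P ^ 2 / C.K ≤ Real.sqrt δ := by
    have b1 : C.P ^ 2 / C.K ≤ 1 / C.P := LSWE.Ctx.pow_div_K_small (by norm_num)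
    refine b1.trans (hPδ.trans (Real.le_sqrt_of_sq_le ?_))
    nlinarith
  refine ⟨C.eps x, C.ept x, mul_pos hs0 hm1,
    (LSWE.Ctx.par_le hx (LSWE.Ctx.m1_le hx)).trans hsmall, mul_pos hs0 hm0,
    (LSWE.Ctx.par_le hx (LSWE.Ctx.m0_le hx)).trans hsmall, LSWE.Ctx.Ph C x,
    LSWE.Ctx.Ph_memZ hβ hx, fun z _ => div_nonneg (LSWE.Ctx.Th_nn hx z) hm1.le,
    fun z hz => ?_, ?_, ?_⟩
  · have e : ∫ ξ in Ioi z, ξ * aF δ ξ * (psi δ (C.eps x) (C.ept x) z /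
        psi δ (C.eps x) (C.ept x) ξ) * conv (LSWE.Ctx.Ph C x) (LSWE.Ctx.Ph C x) ξ =
        C.a z / C.m1 x ^ 2 * C.T x z := by
      unfold LSWE.Ctx.T
      rw [← integral_const_mul]
      refine setIntegral_congr_fun measurableSet_Ioi fun ξ hξ => ?_
      have hξ0 : 0 ≤ ξ := hz.trans (le_of_lt hξ)
      have ha : aF δ ξ = C.a ξ := by rw [hC, LSWE.aa_eq hξ0, LSWE.aF_eq]
      have hap := (C.pos ξ).ne'
      rw [LSWE.Ctx.psi_ratio hδ0 hδ1 hC hz hξ0, LSWE.Ctx.conv_Ph, ha]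
      unfold LSWE.Ctx.G
      field_simp
    rw [e]
    unfold LSWE.Ctx.Ph LSWE.Ctx.Th LSWE.Ctx.eps
    rw [hU z hz, hs]
    unfold LSWE.Ctx.U
    field_simp
  · have e : ∀ z, z * LSWE.Ctx.Ph C x z = z * C.Th x z / C.m1 x := fun z => by
      unfold LSWE.Ctx.Ph; rw [mul_div_assoc]
    simp_rw [e]
    rw [integral_div]
    exact div_self hm1.ne'
  · unfold LSWE.Ctx.Ph
    rw [integral_div]
    show x.2 / C.K * C.m1 x * (C.m0 x / C.m1 x) = x.2 / C.K * C.m0 x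
    field_simp
end

section
/- There exists a constant C > 0 such that for all Φ₁, Φ₂ ∈ Z the convolution Φ₁ * Φ₂ again belongs to Z and satisfies ‖Φ₁ * Φ₂‖_Z ≤ C·‖Φ₁‖_Z·‖Φ₂‖_Z. -/
/-!
The norm of `Z` controls a function pointwise by the single weight
`w z = exp (-β₁ z) * (1 + z) ^ (-β₂)` on `[0, ∞)`, with a constant depending only on `β₁, β₂`
(`abs_le_weight`). In the convolution integrand the exponential factors multiply to `exp (-β₁ z)`
exactly, and one of `y`, `z - y` is at least `z / 2`, so that
`(1 + (z - y)) ^ (-β₂) * (1 + y) ^ (-β₂)` is at most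
`2 ^ β₂ * (1 + z) ^ (-β₂) * ((1 + y) ^ (-β₂) + (1 + (z - y)) ^ (-β₂))`
(`rpow_mul_rpow_le`). Since `β₂ > 1`, the bracket has integral at most `2 / (β₂ - 1)`
uniformly in `z` (`integral_one_add_rpow_le`). So the convolution is again bounded by a multiple
of the weight `w` (`abs_conv_le`), and any such function has both suprema under control.
-/

open MeasureTheory Set Filter

lemma normSup_nonneg (Φ : ℝ → ℝ) : 0 ≤ normSup Φ := by
  apply Real.sSup_nonneg
  rintro _ ⟨z, -, rfl⟩
  exact abs_nonneg _

lemma normTail_nonneg (β₁ β₂ : ℝ) (Φ : ℝ → ℝ) : 0 ≤ normTail β₁ β₂ Φ := by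
  apply Real.sSup_nonneg
  rintro _ ⟨z, hz, rfl⟩
  have : (0:ℝ) ≤ z := zero_le_one.trans hz
  positivity

lemma normZ_nonneg (β₁ β₂ : ℝ) (Φ : ℝ → ℝ) : 0 ≤ normZ β₁ β₂ Φ :=
  add_nonneg (normSup_nonneg Φ) (normTail_nonneg β₁ β₂ Φ)

/-- The two parts of the norm of `Z` combine into one weighted pointwise bound on `[0, ∞)`. -/
lemma abs_le_weight {β₁ β₂ : ℝ} (hβ₁ : 0 < β₁) (hβ₂ : 1 < β₂) {Φ : ℝ → ℝ}
    (hΦ : memZ β₁ β₂ Φ) {y : ℝ} (hy : 0 ≤ y) :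
    |Φ y| ≤ Real.exp β₁ * 2 ^ β₂ * normZ β₁ β₂ Φ *
      (Real.exp (-(β₁ * y)) * (1 + y) ^ (-β₂)) := by
  obtain ⟨-, hS, hT⟩ := hΦ
  have hN := normZ_nonneg β₁ β₂ Φ
  have h1y : 0 < 1 + y := by linarith
  have hpow : ∀ x : ℝ, 0 < x → 1 + y ≤ 2 * x → x ^ (-β₂) ≤ 2 ^ β₂ * (1 + y) ^ (-β₂) := by
    intro x hx hxy
    have h1 : (2 * x) ^ (-β₂) ≤ (1 + y) ^ (-β₂) :=
      Real.rpow_le_rpow_of_nonpos h1y hxy (by linarith)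
    rw [Real.mul_rpow (by norm_num) hx.le, Real.rpow_neg (by norm_num : (0:ℝ) ≤ 2)] at h1
    have h2 : (0:ℝ) < 2 ^ β₂ := by positivity
    rwa [inv_mul_le_iff₀ h2] at h1
  rcases le_total y 1 with h | h
  · have h1 : |Φ y| ≤ normZ β₁ β₂ Φ :=
      (le_csSup hS ⟨y, ⟨hy, h⟩, rfl⟩).trans
        (le_add_of_nonneg_right (normTail_nonneg β₁ β₂ Φ))
    have h2 : 1 ≤ Real.exp β₁ * Real.exp (-(β₁ * y)) := by
      rw [← Real.exp_add]
      apply Real.one_le_exp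
      nlinarith
    have h3 : 1 ≤ (2:ℝ) ^ β₂ * (1 + y) ^ (-β₂) := by
      have := hpow 1 one_pos (by linarith)
      rwa [Real.one_rpow] at this
    calc |Φ y| ≤ normZ β₁ β₂ Φ * 1 := by simpa using h1
      _ ≤ normZ β₁ β₂ Φ * ((Real.exp β₁ * Real.exp (-(β₁ * y))) *
            ((2:ℝ) ^ β₂ * (1 + y) ^ (-β₂))) := by
          gcongr
          exact one_le_mul_of_one_le_of_one_le h2 h3
      _ = _ := by ring
  · have hy0 : 0 < y := by linarith
    have h1 : |Φ y| * Real.exp (β₁ * y) * y ^ β₂ ≤ normZ β₁ β₂ Φ :=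
      (le_csSup hT ⟨y, h, rfl⟩).trans (le_add_of_nonneg_left (normSup_nonneg Φ))
    have h2 : |Φ y| = (|Φ y| * Real.exp (β₁ * y) * y ^ β₂) *
        (Real.exp (-(β₁ * y)) * y ^ (-β₂)) := by
      have e1 : Real.exp (β₁ * y) * Real.exp (-(β₁ * y)) = 1 := by
        rw [← Real.exp_add]; simp
      have e2 : y ^ β₂ * y ^ (-β₂) = 1 := by
        rw [← Real.rpow_add hy0]; simp
      linear_combination (-|Φ y|) * (y ^ β₂ * y ^ (-β₂)) * e1 - |Φ y| * e2
    have h3 : (1:ℝ) ≤ Real.exp β₁ := Real.one_le_exp hβ₁.le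
    calc |Φ y| = (|Φ y| * Real.exp (β₁ * y) * y ^ β₂) *
        (Real.exp (-(β₁ * y)) * y ^ (-β₂)) := h2
      _ ≤ (Real.exp β₁ * normZ β₁ β₂ Φ) *
        (Real.exp (-(β₁ * y)) * (2 ^ β₂ * (1 + y) ^ (-β₂))) := by
          refine mul_le_mul (h1.trans (le_mul_of_one_le_left hN h3))
            (mul_le_mul_of_nonneg_left (hpow y hy0 (by linarith)) (Real.exp_pos _).le)
            (by positivity) (by positivity)
      _ = _ := by ring

/-- The larger of `y` and `z - y` is at least `z / 2`, so its factor decays like the weight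
at `z`. -/
lemma rpow_mul_rpow_le {β₂ : ℝ} (hβ₂ : 1 < β₂) {y z : ℝ} (hy : 0 ≤ y) (hyz : y ≤ z) :
    (1 + (z - y)) ^ (-β₂) * (1 + y) ^ (-β₂) ≤
      2 ^ β₂ * (1 + z) ^ (-β₂) * ((1 + y) ^ (-β₂) + (1 + (z - y)) ^ (-β₂)) := by
  have key : ∀ x : ℝ, 0 < x → 1 + z ≤ 2 * x → x ^ (-β₂) ≤ 2 ^ β₂ * (1 + z) ^ (-β₂) := by
    intro x hx hxz
    have h1 : (2 * x) ^ (-β₂) ≤ (1 + z) ^ (-β₂) :=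
      Real.rpow_le_rpow_of_nonpos (by linarith) hxz (by linarith)
    rw [Real.mul_rpow (by norm_num) hx.le, Real.rpow_neg (by norm_num : (0:ℝ) ≤ 2)] at h1
    have h2 : (0:ℝ) < 2 ^ β₂ := by positivity
    rwa [inv_mul_le_iff₀ h2] at h1
  have hp : 0 ≤ (1 + y) ^ (-β₂) := Real.rpow_nonneg (by linarith) _
  have hq : 0 ≤ (1 + (z - y)) ^ (-β₂) := Real.rpow_nonneg (by linarith) _
  have hr : 0 ≤ 2 ^ β₂ * (1 + z) ^ (-β₂) :=
    mul_nonneg (by positivity) (Real.rpow_nonneg (by linarith) _)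
  rcases le_total y (z / 2) with h | h
  · have := key (1 + (z - y)) (by linarith) (by linarith)
    nlinarith [mul_le_mul_of_nonneg_right this hp, mul_nonneg hr hq]
  · have := key (1 + y) (by linarith) (by linarith)
    nlinarith [mul_le_mul_of_nonneg_left this hq, mul_nonneg hr hp]

lemma intervalIntegrable_one_add_rpow (β₂ : ℝ) {z : ℝ} (hz : 0 ≤ z) :
    IntervalIntegrable (fun y : ℝ => (1 + y) ^ (-β₂)) volume 0 z := by
  apply ContinuousOn.intervalIntegrable
  rw [uIcc_of_le hz]
  intro y hy
  apply ContinuousAt.continuousWithinAt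
  exact ContinuousAt.rpow_const (by fun_prop) (Or.inl (by linarith [hy.1]))

lemma integral_one_add_rpow_le {β₂ : ℝ} (hβ₂ : 1 < β₂) {z : ℝ} (hz : 0 ≤ z) :
    ∫ y in (0:ℝ)..z, (1 + y) ^ (-β₂) ≤ 1 / (β₂ - 1) := by
  have h0 : (0:ℝ) ∉ uIcc (1 + 0) (1 + z) := by
    rw [uIcc_of_le (by linarith)]
    intro h
    linarith [h.1]
  rw [intervalIntegral.integral_comp_add_left (fun x : ℝ => x ^ (-β₂)) 1,
    integral_rpow (Or.inr ⟨by linarith, h0⟩)]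
  have h1 : 0 ≤ (1 + z) ^ (-β₂ + 1) := Real.rpow_nonneg (by linarith) _
  have h2 : 0 < β₂ - 1 := by linarith
  have h3 : ((1 + z) ^ (-β₂ + 1) - (1 + 0) ^ (-β₂ + 1)) / (-β₂ + 1) =
      (1 - (1 + z) ^ (-β₂ + 1)) / (β₂ - 1) := by
    rw [add_zero, Real.one_rpow, ← neg_div_neg_eq]
    congr 1 <;> ring
  rw [h3]
  gcongr
  linarith

/-- The convolution of two elements of `Z` is bounded by the weight of `Z`. -/
lemma abs_conv_le {β₁ β₂ : ℝ} (hβ₁ : 0 < β₁) (hβ₂ : 1 < β₂) {Φ₁ Φ₂ : ℝ → ℝ}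
    (h₁ : memZ β₁ β₂ Φ₁) (h₂ : memZ β₁ β₂ Φ₂) {z : ℝ} (hz : 0 ≤ z) :
    |conv Φ₁ Φ₂ z| ≤ (Real.exp β₁ * 2 ^ β₂) ^ 2 * 2 ^ β₂ / (β₂ - 1) *
      (normZ β₁ β₂ Φ₁ * normZ β₁ β₂ Φ₂) * (Real.exp (-(β₁ * z)) * (1 + z) ^ (-β₂)) := by
  set K : ℝ := Real.exp β₁ * 2 ^ β₂ with hK
  have hK0 : 0 ≤ K := by positivity
  have hN₁ := normZ_nonneg β₁ β₂ Φ₁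
  have hN₂ := normZ_nonneg β₁ β₂ Φ₂
  set N₁ := normZ β₁ β₂ Φ₁
  set N₂ := normZ β₁ β₂ Φ₂
  have hw : 0 ≤ (1 + z) ^ (-β₂) := Real.rpow_nonneg (by linarith) _
  set A : ℝ := K ^ 2 * (N₁ * N₂) * Real.exp (-(β₁ * z)) * (2 ^ β₂ * (1 + z) ^ (-β₂)) with hA
  have hA0 : 0 ≤ A := by positivity
  have hbound : ∀ y ∈ Ioc (0:ℝ) z, ‖Φ₁ (z - y) * Φ₂ y‖ ≤
      A * ((1 + y) ^ (-β₂) + (1 + (z - y)) ^ (-β₂)) := by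
    rintro y ⟨hy0, hyz⟩
    have b₁ := abs_le_weight hβ₁ hβ₂ h₁ (sub_nonneg.2 hyz)
    have b₂ := abs_le_weight hβ₁ hβ₂ h₂ hy0.le
    have hE : Real.exp (-(β₁ * (z - y))) * Real.exp (-(β₁ * y)) = Real.exp (-(β₁ * z)) := by
      rw [← Real.exp_add]; congr 1; ring
    rw [Real.norm_eq_abs, abs_mul]
    calc |Φ₁ (z - y)| * |Φ₂ y|
        ≤ (K * N₁ * (Real.exp (-(β₁ * (z - y))) * (1 + (z - y)) ^ (-β₂))) *
          (K * N₂ * (Real.exp (-(β₁ * y)) * (1 + y) ^ (-β₂))) :=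
          mul_le_mul b₁ b₂ (abs_nonneg _) ((abs_nonneg _).trans b₁)
      _ = K ^ 2 * (N₁ * N₂) * Real.exp (-(β₁ * z)) *
          ((1 + (z - y)) ^ (-β₂) * (1 + y) ^ (-β₂)) := by rw [← hE]; ring
      _ ≤ K ^ 2 * (N₁ * N₂) * Real.exp (-(β₁ * z)) * (2 ^ β₂ * (1 + z) ^ (-β₂) *
          ((1 + y) ^ (-β₂) + (1 + (z - y)) ^ (-β₂))) := by
          exact mul_le_mul_of_nonneg_left (rpow_mul_rpow_le hβ₂ hy0.le hyz) (by positivity)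
      _ = _ := by rw [hA]; ring
  have i₁ := intervalIntegrable_one_add_rpow β₂ hz
  have i₂ : IntervalIntegrable (fun y : ℝ => (1 + (z - y)) ^ (-β₂)) volume 0 z := by
    have := (i₁.comp_sub_left z).symm
    simpa using this
  have hI : ‖∫ y in (0:ℝ)..z, Φ₁ (z - y) * Φ₂ y‖ ≤
      ∫ y in (0:ℝ)..z, A * ((1 + y) ^ (-β₂) + (1 + (z - y)) ^ (-β₂)) :=
    intervalIntegral.norm_integral_le_of_norm_le hz (ae_of_all _ hbound)
      ((i₁.add i₂).const_mul A)
  have hrefl : ∫ y in (0:ℝ)..z, (1 + (z - y)) ^ (-β₂) = ∫ y in (0:ℝ)..z, (1 + y) ^ (-β₂) := by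
    simpa using intervalIntegral.integral_comp_sub_left
      (a := 0) (b := z) (fun x : ℝ => (1 + x) ^ (-β₂)) z
  rw [intervalIntegral.integral_const_mul, intervalIntegral.integral_add i₁ i₂, hrefl,
    Real.norm_eq_abs] at hI
  have hJ := integral_one_add_rpow_le hβ₂ hz
  have hJ' := mul_le_mul_of_nonneg_left hJ hA0
  have hhalf : |conv Φ₁ Φ₂ z| = 1 / 2 * |∫ y in (0:ℝ)..z, Φ₁ (z - y) * Φ₂ y| := by
    rw [conv, abs_mul, abs_of_pos (by norm_num : (0:ℝ) < 1 / 2)]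
  have hfin : K ^ 2 * 2 ^ β₂ / (β₂ - 1) * (N₁ * N₂) *
      (Real.exp (-(β₁ * z)) * (1 + z) ^ (-β₂)) = A * (1 / (β₂ - 1)) := by
    rw [hA]; ring
  rw [hhalf, hfin]
  linarith

/-- The convolution is measurable on all of `ℝ`; for negative `z` it is the oriented integral. -/
lemma measurable_conv {Φ₁ Φ₂ : ℝ → ℝ} (h₁ : Measurable Φ₁) (h₂ : Measurable Φ₂) :
    Measurable (fun z => conv Φ₁ Φ₂ z) := by
  have hf : Measurable (fun p : ℝ × ℝ => Φ₁ (p.1 - p.2) * Φ₂ p.2) :=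
    (h₁.comp (measurable_fst.sub measurable_snd)).mul (h₂.comp measurable_snd)
  -- Rewriting a set integral as the integral of an indicator makes the domain independent of `z`.
  have key : ∀ s : Set (ℝ × ℝ), MeasurableSet s →
      Measurable (fun z : ℝ => ∫ y in {y | (z, y) ∈ s}, Φ₁ (z - y) * Φ₂ y) := by
    intro s hs
    have h := ((hf.indicator hs).stronglyMeasurable.integral_prod_right'
      (ν := (volume : Measure ℝ))).measurable
    convert h using 2 with z
    have hz : MeasurableSet {y | (z, y) ∈ s} := measurable_prodMk_left hs
    rw [← integral_indicator hz]
    rfl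
  have m₁ : MeasurableSet {p : ℝ × ℝ | p.2 ∈ Ioc 0 p.1} :=
    (measurableSet_lt measurable_const measurable_snd).inter
      (measurableSet_le measurable_snd measurable_fst)
  have m₂ : MeasurableSet {p : ℝ × ℝ | p.2 ∈ Ioc p.1 0} :=
    (measurableSet_lt measurable_fst measurable_snd).inter
      (measurableSet_le measurable_snd measurable_const)
  exact ((key _ m₁).sub (key _ m₂)).const_mul (1 / 2)

/-- the convolution maps Z × Z into Z continuously. -/
theorem stmt2 (β₁ β₂ : ℝ) (hβ₁ : 0 < β₁) (hβ₂ : 1 < β₂) :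
    ∃ C : ℝ, 0 < C ∧ ∀ Φ₁ Φ₂ : ℝ → ℝ, memZ β₁ β₂ Φ₁ → memZ β₁ β₂ Φ₂ →
      memZ β₁ β₂ (fun z => conv Φ₁ Φ₂ z) ∧
      normZ β₁ β₂ (fun z => conv Φ₁ Φ₂ z) ≤ C * normZ β₁ β₂ Φ₁ * normZ β₁ β₂ Φ₂ := by
  have hβ : 0 < β₂ - 1 := by linarith
  set D : ℝ := (Real.exp β₁ * 2 ^ β₂) ^ 2 * 2 ^ β₂ / (β₂ - 1) with hD
  have hD0 : 0 < D := by positivity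
  refine ⟨2 * D, by positivity, fun Φ₁ Φ₂ h₁ h₂ => ?_⟩
  have hN₁ := normZ_nonneg β₁ β₂ Φ₁
  have hN₂ := normZ_nonneg β₁ β₂ Φ₂
  have hb : ∀ z : ℝ, 0 ≤ z → |conv Φ₁ Φ₂ z| ≤ D * (normZ β₁ β₂ Φ₁ * normZ β₁ β₂ Φ₂) *
      (Real.exp (-(β₁ * z)) * (1 + z) ^ (-β₂)) := fun z hz => abs_conv_le hβ₁ hβ₂ h₁ h₂ hz
  set B : ℝ := D * (normZ β₁ β₂ Φ₁ * normZ β₁ β₂ Φ₂) with hB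
  have hB0 : 0 ≤ B := by positivity
  have hS : ∀ x ∈ (fun z => |conv Φ₁ Φ₂ z|) '' Icc (0:ℝ) 1, x ≤ B := by
    rintro _ ⟨z, ⟨hz, -⟩, rfl⟩
    refine (hb z hz).trans (mul_le_of_le_one_right hB0 ?_)
    refine mul_le_one₀ (Real.exp_le_one_iff.2 ?_) (Real.rpow_nonneg (by linarith) _)
      (Real.rpow_le_one_of_one_le_of_nonpos (by linarith) (by linarith))
    have := mul_nonneg hβ₁.le hz
    linarith
  have hT : ∀ x ∈ (fun z => |conv Φ₁ Φ₂ z| * Real.exp (β₁ * z) * z ^ β₂) '' Ici (1:ℝ),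
      x ≤ B := by
    rintro _ ⟨z, hz, rfl⟩
    have hz1 : (1:ℝ) ≤ z := hz
    have hz0 : 0 < z := by linarith
    have hw : (1 + z) ^ (-β₂) ≤ z ^ (-β₂) :=
      Real.rpow_le_rpow_of_nonpos hz0 (by linarith) (by linarith)
    have e1 : Real.exp (-(β₁ * z)) * Real.exp (β₁ * z) = 1 := by
      rw [← Real.exp_add]; simp
    have e2 : z ^ (-β₂) * z ^ β₂ = 1 := by
      rw [← Real.rpow_add hz0]; simp
    calc |conv Φ₁ Φ₂ z| * Real.exp (β₁ * z) * z ^ β₂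
        ≤ (B * (Real.exp (-(β₁ * z)) * z ^ (-β₂))) * Real.exp (β₁ * z) * z ^ β₂ := by
          gcongr
          exact (hb z hz0.le).trans (by gcongr)
      _ = B * (Real.exp (-(β₁ * z)) * Real.exp (β₁ * z)) * (z ^ (-β₂) * z ^ β₂) := by ring
      _ = B := by rw [e1, e2]; ring
  refine ⟨⟨measurable_conv h₁.1 h₂.1, ⟨B, hS⟩, ⟨B, hT⟩⟩, ?_⟩
  have s1 : normSup (fun z => conv Φ₁ Φ₂ z) ≤ B :=
    csSup_le ((nonempty_Icc.2 zero_le_one).image _) hS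
  have s2 : normTail β₁ β₂ (fun z => conv Φ₁ Φ₂ z) ≤ B :=
    csSup_le (nonempty_Ici.image _) hT
  calc normZ β₁ β₂ (fun z => conv Φ₁ Φ₂ z) ≤ B + B := add_le_add s1 s2
    _ = _ := by rw [hB]; ring
end

section
/- As δ → 0⁺ one has √δ·∫₀¹ a_δ(y) dy → √3·π/2^(1/3); equivalently, ∫₀¹ a_δ(y) dy = (κ/√δ)·(1 + o(1)) with κ := √3·π/2^(1/3). -/
/-!
Write `c = (1/2)^(1/3)`, so that `lamLSW = 3c²` and `1 = 2c³`. Under `y = w³` the denominator of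
`aF δ` becomes `(w - c)² (w + 2c) + δ w`, which has a double zero at `w = c` when `δ = 0`.
Zooming in with `w = c + √δ t` turns `√δ ∫₀¹ aF δ` exactly into the integral of
`3w² / (t² (w + 2c) + w)` over those `t` with `0 < w ≤ 1`. There the integrand is dominated by
`3 / (1 + t²)`, because `t² (w + 2c) + w ≥ w (1 + t²)` and `w ≤ 1`. As `δ → 0⁺` it converges
pointwise to `3c / (3t² + 1)`, so dominated convergence gives the limit `√3 π c`.
-/

open MeasureTheory Set Filter

/-- The cube root `c` of `1/2`, at whose cube `1/2` the denominator of `aF 0` vanishes. -/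
noncomputable def cLSW : ℝ := (1/2 : ℝ) ^ ((1:ℝ)/3)

lemma cLSW_pos : 0 < cLSW := by unfold cLSW; positivity

lemma cLSW_lt_one : cLSW < 1 :=
  Real.rpow_lt_one (by norm_num) (by norm_num) (by norm_num)

lemma cLSW_cube : cLSW ^ 3 = 1/2 := by
  unfold cLSW
  rw [← Real.rpow_natCast, ← Real.rpow_mul (by norm_num)]
  norm_num

lemma lamLSW_eq : lamLSW = 3 * cLSW ^ 2 := by
  unfold cLSW lamLSW
  rw [← Real.rpow_natCast, ← Real.rpow_mul (by norm_num)]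
  norm_num

lemma denom_eq (δ w : ℝ) :
    1 + w ^ 3 - (lamLSW - δ) * w = (w - cLSW) ^ 2 * (w + 2 * cLSW) + δ * w := by
  rw [lamLSW_eq]
  linear_combination (-2) * cLSW_cube

lemma denom_pos {δ w : ℝ} (hδ : 0 < δ) (hw : 0 ≤ w) :
    0 < (w - cLSW) ^ 2 * (w + 2 * cLSW) + δ * w := by
  have hc := cLSW_pos
  rcases hw.eq_or_lt with rfl | hw
  · have : (0 - cLSW) ^ 2 * (0 + 2 * cLSW) + δ * 0 = 2 * cLSW ^ 3 := by ring
    rw [this]; positivity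
  · positivity

lemma cube_rpow {w : ℝ} (hw : 0 ≤ w) : (w ^ 3) ^ ((1:ℝ)/3) = w := by
  rw [← Real.rpow_natCast, ← Real.rpow_mul hw]
  norm_num

lemma aF_cube {δ w : ℝ} (hw : 0 ≤ w) :
    aF δ (w ^ 3) = 1 / ((w - cLSW) ^ 2 * (w + 2 * cLSW) + δ * w) := by
  unfold aF
  rw [cube_rpow hw, denom_eq]

lemma aF_continuousOn {δ : ℝ} (hδ : 0 < δ) : ContinuousOn (aF δ) (Ici 0) := by
  unfold aF
  refine continuousOn_const.div ?_ ?_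
  · exact Continuous.continuousOn ((continuous_const.add continuous_id).sub
      (continuous_const.mul (Real.continuous_rpow_const (by norm_num))))
  · intro z hz
    have hz' : (0:ℝ) ≤ z := hz
    have h0 : 0 ≤ z ^ ((1:ℝ)/3) := Real.rpow_nonneg hz' _
    have h3 : (z ^ ((1:ℝ)/3)) ^ 3 = z := by
      rw [← Real.rpow_natCast, ← Real.rpow_mul hz']
      norm_num
    have h := denom_pos hδ h0
    rw [← denom_eq, h3] at h
    exact h.ne'

/-- The rescaled integrand in the variable `t`, where `w = c + s t` and `s = √δ`. -/
noncomputable def rescaled (s t : ℝ) : ℝ :=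
  3 * (cLSW + s * t) ^ 2 / (t ^ 2 * ((cLSW + s * t) + 2 * cLSW) + (cLSW + s * t))

/-- The interval of `t` on which `0 < c + s t ≤ 1`. -/
def rescaledSet (s : ℝ) : Set ℝ := Ioc (-cLSW / s) ((1 - cLSW) / s)

lemma mem_rescaledSet {s t : ℝ} (hs : 0 < s) :
    t ∈ rescaledSet s ↔ 0 < cLSW + s * t ∧ cLSW + s * t ≤ 1 := by
  unfold rescaledSet
  rw [mem_Ioc, div_lt_iff₀ hs, le_div_iff₀ hs]
  constructor <;> rintro ⟨h1, h2⟩ <;> constructor <;> linarith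

lemma integral_rescaled {δ : ℝ} (hδ : 0 < δ) :
    Real.sqrt δ * ∫ y in (0:ℝ)..1, aF δ y
      = ∫ t, (rescaledSet (Real.sqrt δ)).indicator (rescaled (Real.sqrt δ)) t := by
  have hs : 0 < Real.sqrt δ := Real.sqrt_pos.2 hδ
  have hsq : Real.sqrt δ ^ 2 = δ := Real.sq_sqrt hδ.le
  set s := Real.sqrt δ
  have hc := cLSW_pos
  have hc1 := cLSW_lt_one
  have hab : -cLSW / s ≤ (1 - cLSW) / s := by gcongr; linarith
  have hmem : ∀ t ∈ uIcc (-cLSW / s) ((1 - cLSW) / s), 0 ≤ cLSW + s * t := by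
    intro t ht
    rw [uIcc_of_le hab, mem_Icc, div_le_iff₀ hs] at ht
    linarith [ht.1]
  have hsub := intervalIntegral.integral_comp_mul_deriv''' (a := -cLSW / s)
    (b := (1 - cLSW) / s) (f := fun t => (cLSW + s * t) ^ 3)
    (f' := fun t => 3 * (cLSW + s * t) ^ 2 * s) (g := aF δ)
    (by fun_prop)
    (by
      intro t _
      have h := (((hasDerivAt_id t).const_mul s).const_add cLSW).pow 3
      refine HasDerivAt.hasDerivWithinAt ?_
      exact h.congr_deriv (by simp))
    ((aF_continuousOn hδ).mono (by
      rintro _ ⟨t, ht, rfl⟩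
      exact pow_nonneg (hmem t (by
        rw [uIcc_of_le hab]; rw [min_eq_left hab, max_eq_right hab] at ht
        exact Ioo_subset_Icc_self ht)) 3))
    (by
      refine (ContinuousOn.integrableOn_compact ?_ ?_)
      · exact isCompact_uIcc.image (by fun_prop)
      · refine (aF_continuousOn hδ).mono ?_
        rintro _ ⟨t, ht, rfl⟩
        exact pow_nonneg (hmem t ht) 3)
    (by
      refine ContinuousOn.integrableOn_compact isCompact_uIcc ?_
      refine ContinuousOn.mul ?_ (by fun_prop)
      refine (aF_continuousOn hδ).comp (by fun_prop) ?_
      intro t ht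
      exact pow_nonneg (hmem t ht) 3)
  have e0 : (cLSW + s * (-cLSW / s)) ^ 3 = 0 := by field_simp; simp
  have e1 : (cLSW + s * ((1 - cLSW) / s)) ^ 3 = 1 := by field_simp; simp
  simp only [e0, e1] at hsub
  rw [← hsub, rescaledSet, integral_indicator measurableSet_Ioc,
    ← intervalIntegral.integral_of_le hab, ← intervalIntegral.integral_const_mul]
  refine intervalIntegral.integral_congr fun t ht => ?_
  have hw := hmem t ht
  have hd := denom_pos hδ hw
  simp only [Function.comp, rescaled, aF_cube hw]
  -- Both denominators agree up to the factor `δ = s²`.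
  have key : (cLSW + s * t - cLSW) ^ 2 * (cLSW + s * t + 2 * cLSW) + δ * (cLSW + s * t)
      = s ^ 2 * (t ^ 2 * ((cLSW + s * t) + 2 * cLSW) + (cLSW + s * t)) := by
    rw [hsq.symm]; ring
  rw [key] at hd ⊢
  have hd' := (pos_iff_pos_of_mul_pos hd).1 (by positivity)
  field_simp

lemma rescaled_bound {s t : ℝ} (hs : 0 < s) :
    ‖(rescaledSet s).indicator (rescaled s) t‖ ≤ 3 * (1 + t ^ 2)⁻¹ := by
  have hc := cLSW_pos
  by_cases ht : t ∈ rescaledSet s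
  · rw [indicator_of_mem ht]
    obtain ⟨h0, h1⟩ := (mem_rescaledSet hs).1 ht
    unfold rescaled
    generalize cLSW + s * t = w at h0 h1
    rw [Real.norm_of_nonneg (by positivity), ← div_eq_mul_inv,
      div_le_div_iff₀ (by positivity) (by positivity)]
    have h2 : w * (w * (1 + t ^ 2)) ≤ 1 * (w * (1 + t ^ 2)) := by gcongr
    have h3 : 0 ≤ t ^ 2 * cLSW := by positivity
    nlinarith
  · rw [indicator_of_notMem ht, norm_zero]
    positivity

lemma rescaled_tendsto (t : ℝ) :
    Tendsto (fun δ : ℝ => (rescaledSet (Real.sqrt δ)).indicator (rescaled (Real.sqrt δ)) t)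
      (nhdsWithin 0 (Ioi 0)) (nhds (3 * cLSW * (1 + (Real.sqrt 3 * t) ^ 2)⁻¹)) := by
  have hc := cLSW_pos
  have hw : Tendsto (fun δ : ℝ => cLSW + Real.sqrt δ * t) (nhdsWithin 0 (Ioi 0))
      (nhds cLSW) := by
    have h : Continuous (fun δ : ℝ => cLSW + Real.sqrt δ * t) := by fun_prop
    have h' := h.tendsto 0
    simp only [Real.sqrt_zero, zero_mul, add_zero] at h'
    exact h'.mono_left nhdsWithin_le_nhds
  have hd : t ^ 2 * (cLSW + 2 * cLSW) + cLSW ≠ 0 := by positivity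
  have hlim : Tendsto (fun δ : ℝ => rescaled (Real.sqrt δ) t) (nhdsWithin 0 (Ioi 0))
      (nhds (3 * cLSW ^ 2 / (t ^ 2 * (cLSW + 2 * cLSW) + cLSW))) :=
    ((hw.pow 2).const_mul 3).div (((hw.add_const _).const_mul _).add hw) hd
  have hval : 3 * cLSW ^ 2 / (t ^ 2 * (cLSW + 2 * cLSW) + cLSW)
      = 3 * cLSW * (1 + (Real.sqrt 3 * t) ^ 2)⁻¹ := by
    rw [mul_pow, Real.sq_sqrt (by norm_num)]
    have : t ^ 2 * (cLSW + 2 * cLSW) + cLSW = cLSW * (1 + 3 * t ^ 2) := by ring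
    rw [this]
    field_simp
  rw [← hval]
  refine hlim.congr' ?_
  filter_upwards [hw.eventually (lt_mem_nhds cLSW_pos), hw.eventually (gt_mem_nhds cLSW_lt_one),
    self_mem_nhdsWithin] with δ h0 h1 hδ
  rw [indicator_of_mem ((mem_rescaledSet (Real.sqrt_pos.2 hδ)).2 ⟨h0, h1.le⟩)]

lemma integral_limit :
    ∫ t : ℝ, 3 * cLSW * (1 + (Real.sqrt 3 * t) ^ 2)⁻¹
      = Real.sqrt 3 * Real.pi / (2:ℝ) ^ ((1:ℝ)/3) := by
  have h := Measure.integral_comp_mul_left (fun x : ℝ => (1 + x ^ 2)⁻¹) (Real.sqrt 3)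
  have hc : cLSW = ((2:ℝ) ^ ((1:ℝ)/3))⁻¹ := by
    unfold cLSW
    rw [← Real.inv_rpow (by norm_num)]
    norm_num
  have h3 : Real.sqrt 3 ^ 2 = 3 := Real.sq_sqrt (by norm_num)
  rw [integral_const_mul, h, integral_univ_inv_one_add_sq, abs_of_pos (by positivity),
    smul_eq_mul, hc]
  field_simp
  linear_combination -h3

/-- asymptotics of ∫₀¹ a_δ as δ → 0⁺. -/
theorem stmt6 :
    Tendsto (fun δ : ℝ => Real.sqrt δ * ∫ y in (0:ℝ)..1, aF δ y)
      (nhdsWithin 0 (Ioi 0)) (nhds (Real.sqrt 3 * Real.pi / (2:ℝ) ^ ((1:ℝ)/3))) := by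
  rw [← integral_limit]
  have hpos : ∀ᶠ δ : ℝ in nhdsWithin 0 (Ioi 0), 0 < δ := self_mem_nhdsWithin
  refine Tendsto.congr' (hpos.mono fun δ hδ => (integral_rescaled hδ).symm) ?_
  refine tendsto_integral_filter_of_dominated_convergence
    (fun t => 3 * (1 + t ^ 2)⁻¹) ?_ ?_ (integrable_inv_one_add_sq.const_mul 3) ?_
  · refine Eventually.of_forall fun δ => Measurable.aestronglyMeasurable ?_
    refine Measurable.indicator ?_ measurableSet_Ioc
    unfold rescaled
    fun_prop
  · exact hpos.mono fun δ hδ =>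
      Eventually.of_forall fun t => rescaled_bound (Real.sqrt_pos.2 hδ)
  · exact Eventually.of_forall rescaled_tendsto
end

section
/- There exists a constant C > 0 such that ∫₀¹ ρ_δ(ξ) dξ ≤ C for all δ ∈ (0,1]. Moreover, for every σ ∈ (0, 1/2): (i) there is a constant c_σ > 0 such that ρ_δ(ξ) ≥ c_σ for all δ ∈ (0,1] and all ξ ∈ [1/2 + σ, 1]; (ii) sup_{0 ≤ ξ ≤ 1/2 − σ} ρ_δ(ξ) → 0 as δ → 0⁺. -/
/-!
Write `D = 1 / a_δ`, so that `D z = 1 + z - (λ_LSW - δ) z^(1/3)` and `b_δ = 1 + D'`. Then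
`∫_ξ^1 a_δ b_δ = ∫_ξ^1 1/D + log D(1) - log D(ξ)`, and hence
`ρ_δ(ξ) = ξ / D(1) * exp (-∫_ξ^1 1/D)` (`rhoF_eq`).

In the variable `t = z^(1/3)`, with `s = (1/2)^(1/3)`, the denominator is
`D = (t - s)² (t + 2 s) + δ t`; therefore `(z - 1/2)² / 9 ≤ D z ≤ 48 (z - 1/2)² + δ` on `[0, 1]`
(`le_denF`, `denF_le`). The lower bound at `z = 1` gives `ρ_δ ≤ 36`. On `[1/2 + σ, 1]` it keeps
`∫_ξ^1 1/D` bounded, which bounds `ρ_δ` from below. Finally, if `ξ ≤ 1/2 - σ` and `√δ ≤ σ`, the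
upper bound gives `D ≤ 49 δ` on `[1/2 - √δ, 1/2]`, so `∫_ξ^1 1/D ≥ 1 / (49 √δ) → ∞`.
-/

open MeasureTheory Set Filter

/-! ### The denominator `1 / a_δ` -/

/-- The reciprocal of `aF`, i.e. `1 + z - (λ_LSW - δ) z^(1/3)`. -/
noncomputable def denF (δ z : ℝ) : ℝ := 1 + z - (lamLSW - δ) * z ^ ((1:ℝ)/3)

lemma aF_eq (δ z : ℝ) : aF δ z = 1 / denF δ z := rfl

/-- With `t = z^(1/3)` and `s = (1/2)^(1/3)` one has `λ_LSW = 3 s²` and `1 = 2 s³`, so the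
denominator factors with a double root at `t = s`, up to the perturbation `δ t`. -/
lemma exists_cubeRoot : ∃ s : ℝ, 1/2 ≤ s ∧ s ≤ 1 ∧ s ^ 3 = 1/2 ∧ ∀ δ z : ℝ, 0 ≤ z →
    denF δ z = (z ^ ((1:ℝ)/3) - s) ^ 2 * (z ^ ((1:ℝ)/3) + 2 * s) + δ * z ^ ((1:ℝ)/3) := by
  have cube : ∀ z : ℝ, 0 ≤ z → (z ^ ((1:ℝ)/3)) ^ 3 = z := fun z hz => by
    rw [← Real.rpow_natCast, ← Real.rpow_mul hz]; norm_num
  have hs0 : (0:ℝ) ≤ (1/2 : ℝ) ^ ((1:ℝ)/3) := by positivity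
  have hs3 := cube (1/2) (by norm_num)
  have hlam : lamLSW = 3 * ((1/2 : ℝ) ^ ((1:ℝ)/3)) ^ 2 := by
    rw [lamLSW, ← Real.rpow_natCast ((1/2 : ℝ) ^ ((1:ℝ)/3)), ← Real.rpow_mul (by norm_num)]
    norm_num
  refine ⟨(1/2 : ℝ) ^ ((1:ℝ)/3), ?_, ?_, hs3, fun δ z hz => ?_⟩
  · by_contra! h
    have := pow_lt_pow_left₀ h hs0 (n := 3) (by norm_num)
    rw [hs3] at this
    norm_num at this
  · exact Real.rpow_le_one (by norm_num) (by norm_num) (by norm_num)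
  · have hz3 := cube z hz
    rw [denF, hlam]
    generalize (1/2 : ℝ) ^ ((1:ℝ)/3) = s at *
    generalize z ^ ((1:ℝ)/3) = t at *
    linear_combination -hz3 - 2 * hs3

lemma cubeRoot_mem {z : ℝ} (hz : z ∈ Icc (0:ℝ) 1) :
    0 ≤ z ^ ((1:ℝ)/3) ∧ z ^ ((1:ℝ)/3) ≤ 1 ∧ (z ^ ((1:ℝ)/3)) ^ 3 = z := by
  refine ⟨Real.rpow_nonneg hz.1 _, Real.rpow_le_one hz.1 hz.2 (by norm_num), ?_⟩
  rw [← Real.rpow_natCast, ← Real.rpow_mul hz.1]; norm_num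

/-- Uniform quadratic lower bound around the degenerate point `1/2`. -/
lemma le_denF {δ z : ℝ} (hδ : 0 ≤ δ) (hz : z ∈ Icc (0:ℝ) 1) :
    (z - 1/2) ^ 2 / 9 ≤ denF δ z := by
  obtain ⟨s, hs, hs1, hs3, H⟩ := exists_cubeRoot
  obtain ⟨ht0, ht1, ht3⟩ := cubeRoot_mem hz
  rw [H δ z hz.1]
  generalize z ^ ((1:ℝ)/3) = t at *
  have e : (z - 1/2) ^ 2 = (t - s) ^ 2 * (t ^ 2 + t * s + s ^ 2) ^ 2 := by
    rw [← ht3, ← hs3]; ring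
  have h1 : t ^ 2 + t * s + s ^ 2 ≤ 3 := by nlinarith
  have h2 : (t ^ 2 + t * s + s ^ 2) ^ 2 ≤ 9 := by
    have h0 : 0 ≤ t ^ 2 + t * s + s ^ 2 := by positivity
    nlinarith
  have h3 := mul_le_mul_of_nonneg_left h2 (sq_nonneg (t - s))
  have h4 : (t - s) ^ 2 * 1 ≤ (t - s) ^ 2 * (t + 2 * s) :=
    mul_le_mul_of_nonneg_left (by linarith) (sq_nonneg _)
  have h5 := mul_nonneg hδ ht0
  rw [e]
  linarith

lemma denF_le {δ z : ℝ} (hδ : 0 ≤ δ) (hz : z ∈ Icc (0:ℝ) 1) :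
    denF δ z ≤ 48 * (z - 1/2) ^ 2 + δ := by
  obtain ⟨s, hs, hs1, hs3, H⟩ := exists_cubeRoot
  obtain ⟨ht0, ht1, ht3⟩ := cubeRoot_mem hz
  rw [H δ z hz.1]
  generalize z ^ ((1:ℝ)/3) = t at *
  have e : (z - 1/2) ^ 2 = (t - s) ^ 2 * (t ^ 2 + t * s + s ^ 2) ^ 2 := by
    rw [← ht3, ← hs3]; ring
  have h1 : 1/4 ≤ t ^ 2 + t * s + s ^ 2 := by nlinarith [mul_nonneg ht0 (by linarith : 0 ≤ s)]
  have h2 : 1/16 ≤ (t ^ 2 + t * s + s ^ 2) ^ 2 := by nlinarith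
  have h3 := mul_le_mul_of_nonneg_left h2 (sq_nonneg (t - s))
  have h4 : (t - s) ^ 2 * (t + 2 * s) ≤ (t - s) ^ 2 * 3 :=
    mul_le_mul_of_nonneg_left (by linarith) (sq_nonneg _)
  have h5 : δ * t ≤ δ := mul_le_of_le_one_right hδ ht1
  rw [e]
  linarith

lemma denF_pos {δ z : ℝ} (hδ : 0 < δ) (hz : z ∈ Ioc (0:ℝ) 1) : 0 < denF δ z := by
  obtain ⟨s, hs, -, -, H⟩ := exists_cubeRoot
  rw [H δ z hz.1.le]
  have := Real.rpow_pos_of_pos hz.1 ((1:ℝ)/3)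
  positivity

/-! ### Closed form of `ρ_δ` -/

lemma hasDerivAt_denF (δ : ℝ) {z : ℝ} (hz : 0 < z) :
    HasDerivAt (denF δ) (bF δ z - 1) z := by
  have h := ((hasDerivAt_id z).const_add 1).sub
    ((Real.hasDerivAt_rpow_const (p := (1:ℝ)/3) (Or.inl hz.ne')).const_mul (lamLSW - δ))
  refine h.congr_deriv ?_
  rw [bF, show (1:ℝ)/3 - 1 = -(2:ℝ)/3 by norm_num]
  ring

lemma continuousOn_denF (δ : ℝ) : ContinuousOn (denF δ) (Ioi 0) :=
  fun _ hz => (hasDerivAt_denF δ hz).continuousAt.continuousWithinAt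

lemma continuousOn_bF (δ : ℝ) : ContinuousOn (bF δ) (Ioi 0) := by
  have : ContinuousOn (fun z : ℝ => z ^ (-(2:ℝ)/3)) (Ioi 0) :=
    fun z hz => (Real.continuousAt_rpow_const z _ (Or.inl (ne_of_gt hz))).continuousWithinAt
  unfold bF
  fun_prop

lemma intervalIntegrable_inv_denF {δ x y : ℝ} (hδ : 0 < δ) (hx : x ∈ Ioc (0:ℝ) 1)
    (hy : y ∈ Ioc (0:ℝ) 1) : IntervalIntegrable (fun z => 1 / denF δ z) volume x y := by
  have hsub : uIcc x y ⊆ Ioc (0:ℝ) 1 := ordConnected_Ioc.uIcc_subset hx hy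
  exact (continuousOn_const.div ((continuousOn_denF δ).mono fun z hz => (hsub hz).1)
    fun z hz => (denF_pos hδ (hsub hz)).ne').intervalIntegrable

/-- Since `b = 1 + D'` for `D = 1 / a`, the part `D' / D` of the exponent integrates to a logarithm
and cancels the prefactor `a`. -/
lemma rhoF_eq {δ ξ : ℝ} (hδ : 0 < δ) (hξ : ξ ∈ Ioc (0:ℝ) 1) :
    rhoF δ ξ = ξ / denF δ 1 * Real.exp (-∫ y in ξ..(1:ℝ), 1 / denF δ y) := by
  have h1 : (1:ℝ) ∈ Ioc (0:ℝ) 1 := by simp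
  have hsub : uIcc ξ 1 ⊆ Ioc (0:ℝ) 1 := ordConnected_Ioc.uIcc_subset hξ h1
  have hpos : ∀ z ∈ uIcc ξ 1, 0 < denF δ z := fun z hz => denF_pos hδ (hsub hz)
  have hint : IntervalIntegrable (fun z => (bF δ z - 1) / denF δ z) volume ξ 1 :=
    ((((continuousOn_bF δ).mono fun z hz => (hsub hz).1).sub continuousOn_const).div
      ((continuousOn_denF δ).mono fun z hz => (hsub hz).1)
      fun z hz => (hpos z hz).ne').intervalIntegrable
  have hlog : ∫ z in ξ..(1:ℝ), (bF δ z - 1) / denF δ z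
      = Real.log (denF δ 1) - Real.log (denF δ ξ) :=
    intervalIntegral.integral_eq_sub_of_hasDerivAt
      (f := fun z => Real.log (denF δ z))
      (fun z hz => (hasDerivAt_denF δ (hsub hz).1).log (hpos z hz).ne') hint
  have hsum : ∫ y in ξ..(1:ℝ), aF δ y * bF δ y
      = (∫ y in ξ..(1:ℝ), 1 / denF δ y) + (Real.log (denF δ 1) - Real.log (denF δ ξ)) := by
    rw [← hlog, ← intervalIntegral.integral_add (intervalIntegrable_inv_denF hδ hξ h1) hint]
    congr 1
    ext y
    rw [aF_eq]
    ring
  have p1 := denF_pos hδ h1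
  have pξ := denF_pos hδ hξ
  rw [rhoF, hsum, aF_eq, neg_add, neg_sub, Real.exp_add, Real.exp_sub, Real.exp_log p1,
    Real.exp_log pξ]
  field_simp

/-! ### Bounds on `ρ_δ` -/

lemma rhoF_zero (δ : ℝ) : rhoF δ 0 = 0 := by simp [rhoF]

lemma rhoF_nonneg {δ ξ : ℝ} (hδ : 0 < δ) (hξ : ξ ∈ Icc (0:ℝ) 1) : 0 ≤ rhoF δ ξ := by
  rcases hξ.1.eq_or_lt with rfl | h
  · rw [rhoF_zero]
  · rw [rhoF_eq hδ ⟨h, hξ.2⟩]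
    have := denF_pos hδ (z := 1) (by simp)
    positivity

/-- A lower bound for the integral in the exponent, together with `D(1) ≥ 1/36`, bounds `ρ`. -/
lemma rhoF_le {δ ξ m : ℝ} (hδ : 0 < δ) (hξ : ξ ∈ Ioc (0:ℝ) 1)
    (hm : m ≤ ∫ y in ξ..(1:ℝ), 1 / denF δ y) : rhoF δ ξ ≤ 36 * Real.exp (-m) := by
  have hd : 1/36 ≤ denF δ 1 := by
    have := le_denF hδ.le (z := 1) (by simp)
    norm_num at this ⊢
    exact this
  rw [rhoF_eq hδ hξ]
  refine mul_le_mul ?_ (Real.exp_le_exp.2 (by linarith)) (Real.exp_pos _).le (by norm_num)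
  rw [div_le_iff₀ (by linarith)]
  linarith [hξ.2]

lemma rhoF_le_const {δ ξ : ℝ} (hδ : 0 < δ) (hξ : ξ ∈ Ioc (0:ℝ) 1) : rhoF δ ξ ≤ 36 := by
  have := rhoF_le hδ hξ (m := 0) (intervalIntegral.integral_nonneg hξ.2 fun y hy =>
    (one_div_pos.2 (denF_pos hδ ⟨hξ.1.trans_le hy.1, hy.2⟩)).le)
  simpa using this

/-- Here `ξ ≥ 1/2` and `D(1) ≤ 13` bound the prefactor, and `D ≥ σ² / 9` on `[ξ, 1]` bounds the
exponent. -/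
lemma le_rhoF {σ δ ξ : ℝ} (hσ : 0 < σ) (hδ : δ ∈ Ioc (0:ℝ) 1) (hξ : ξ ∈ Icc (1/2 + σ) 1) :
    1/26 * Real.exp (-(9 / σ ^ 2)) ≤ rhoF δ ξ := by
  have hξ' : ξ ∈ Ioc (0:ℝ) 1 := ⟨by linarith [hξ.1], hξ.2⟩
  have h1 : (1:ℝ) ∈ Ioc (0:ℝ) 1 := by simp
  have p1 := denF_pos hδ.1 h1
  have hd : denF δ 1 ≤ 13 := by
    have := denF_le hδ.1.le (z := 1) (by simp)
    norm_num at this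
    linarith [hδ.2]
  have hint : ∫ y in ξ..(1:ℝ), 1 / denF δ y ≤ 9 / σ ^ 2 := by
    have hle : ∫ y in ξ..(1:ℝ), 1 / denF δ y ≤ ∫ _y in ξ..(1:ℝ), 9 / σ ^ 2 := by
      refine intervalIntegral.integral_mono_on hξ.2
        (intervalIntegrable_inv_denF hδ.1 hξ' h1) (by simp) fun y hy => ?_
      have hb := le_denF hδ.1.le (z := y) ⟨by linarith [hξ'.1, hy.1], hy.2⟩
      have hs : σ ^ 2 ≤ (y - 1/2) ^ 2 :=
        pow_le_pow_left₀ hσ.le (by linarith [hξ.1, hy.1]) 2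
      rw [div_le_div_iff₀ (denF_pos hδ.1 ⟨by linarith [hξ'.1, hy.1], hy.2⟩) (by positivity)]
      linarith
    rw [intervalIntegral.integral_const, smul_eq_mul] at hle
    have : (1 - ξ) * (9 / σ ^ 2) ≤ 9 / σ ^ 2 :=
      mul_le_of_le_one_left (by positivity) (by linarith [hξ'.1])
    linarith
  rw [rhoF_eq hδ.1 hξ']
  refine mul_le_mul ?_ (Real.exp_le_exp.2 (by linarith)) (Real.exp_pos _).le
    (div_nonneg hξ'.1.le p1.le)
  rw [le_div_iff₀ p1]
  linarith [hξ.1]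

/-- On `[1/2 - √δ, 1/2]` the denominator is at most `49 δ`, so this interval alone contributes
at least `√δ / (49 δ)` to the exponent. -/
lemma rhoF_le_exp {σ δ ξ : ℝ} (hσ : σ < 1/2) (hδ : 0 < δ) (hδσ : √δ ≤ σ)
    (hξ : ξ ∈ Icc (0:ℝ) (1/2 - σ)) : rhoF δ ξ ≤ 36 * Real.exp (-((√δ)⁻¹ / 49)) := by
  rcases hξ.1.eq_or_lt with rfl | h0
  · rw [rhoF_zero]; positivity
  have hr : 0 < √δ := Real.sqrt_pos.2 hδ
  have hrr : √δ ^ 2 = δ := Real.sq_sqrt hδ.le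
  have hξ' : ξ ∈ Ioc (0:ℝ) 1 := ⟨h0, by linarith [hξ.2]⟩
  refine rhoF_le hδ hξ' ?_
  have hA : (1/2 - √δ) ∈ Ioc (0:ℝ) 1 := ⟨by linarith, by linarith⟩
  have hB : (1/2 : ℝ) ∈ Ioc (0:ℝ) 1 := by norm_num
  have h1 : (1:ℝ) ∈ Ioc (0:ℝ) 1 := by simp
  have hpos : ∀ y ∈ Ioc (0:ℝ) 1, 0 ≤ 1 / denF δ y :=
    fun y hy => (one_div_pos.2 (denF_pos hδ hy)).le
  have e1 := intervalIntegral.integral_add_adjacent_intervals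
    (intervalIntegrable_inv_denF hδ hξ' hA) (intervalIntegrable_inv_denF hδ hA hB)
  have e2 := intervalIntegral.integral_add_adjacent_intervals
    (intervalIntegrable_inv_denF hδ hξ' hB) (intervalIntegrable_inv_denF hδ hB h1)
  have i1 : 0 ≤ ∫ y in ξ..(1/2 - √δ), 1 / denF δ y :=
    intervalIntegral.integral_nonneg (by linarith [hξ.2]) fun y hy =>
      hpos y ⟨h0.trans_le hy.1, hy.2.trans hA.2⟩
  have i2 : 0 ≤ ∫ y in (1/2)..(1:ℝ), 1 / denF δ y :=
    intervalIntegral.integral_nonneg (by norm_num) fun y hy =>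
      hpos y ⟨by linarith [hy.1], hy.2⟩
  have i3 : ∫ _y in (1/2 - √δ)..(1/2), 1 / (49 * δ) ≤ ∫ y in (1/2 - √δ)..(1/2), 1 / denF δ y := by
    refine intervalIntegral.integral_mono_on (by linarith) (by simp)
      (intervalIntegrable_inv_denF hδ hA hB) fun y hy => ?_
    have hy' : y ∈ Ioc (0:ℝ) 1 := ⟨hA.1.trans_le hy.1, hy.2.trans hB.2⟩
    refine one_div_le_one_div_of_le (denF_pos hδ hy') ?_
    have := denF_le hδ.le ⟨hy'.1.le, hy'.2⟩
    have hsq : (y - 1/2) ^ 2 ≤ √δ ^ 2 := sq_le_sq' (by linarith [hy.1]) (by linarith [hy.2])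
    linarith
  have i4 : ∫ _y in (1/2 - √δ)..(1/2), 1 / (49 * δ) = (√δ)⁻¹ / 49 := by
    rw [intervalIntegral.integral_const, smul_eq_mul]
    have e : 1 / (49 * δ) = 1 / (49 * √δ ^ 2) := by rw [hrr]
    rw [e]
    field_simp
    ring
  linarith

/-- properties of ρ_δ. -/
theorem stmt8 :
    (∃ C : ℝ, 0 < C ∧ ∀ δ ∈ Ioc (0:ℝ) 1, (∫ ξ in (0:ℝ)..1, rhoF δ ξ) ≤ C) ∧
    ∀ σ ∈ Ioo (0:ℝ) (1/2),
      (∃ c : ℝ, 0 < c ∧ ∀ δ ∈ Ioc (0:ℝ) 1, ∀ ξ ∈ Icc (1/2 + σ) 1, c ≤ rhoF δ ξ) ∧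
      Tendsto (fun δ => sSup ((fun ξ => rhoF δ ξ) '' Icc (0:ℝ) (1/2 - σ)))
        (nhdsWithin 0 (Ioi 0)) (nhds 0) := by
  refine ⟨⟨36, by norm_num, fun δ hδ => ?_⟩, fun σ hσ => ⟨?_, ?_⟩⟩
  · have h := intervalIntegral.norm_integral_le_of_norm_le_const (a := 0) (b := 1) (C := 36)
      (f := rhoF δ) fun x hx => by
        rw [uIoc_of_le zero_le_one] at hx
        rw [Real.norm_of_nonneg (rhoF_nonneg hδ.1 ⟨hx.1.le, hx.2⟩)]
        exact rhoF_le_const hδ.1 hx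
    simpa using (le_abs_self _).trans h
  · exact ⟨_, by positivity, fun δ hδ ξ hξ => le_rhoF hσ.1 hδ hξ⟩
  · have hsqrt : Tendsto (fun δ : ℝ => √δ) (nhdsWithin 0 (Ioi 0)) (nhdsWithin 0 (Ioi 0)) := by
      refine tendsto_nhdsWithin_iff.2 ⟨?_, ?_⟩
      · simpa using (Real.continuous_sqrt.tendsto 0).mono_left nhdsWithin_le_nhds
      · filter_upwards [self_mem_nhdsWithin] with δ hδ using Real.sqrt_pos.2 hδ
    have hlim : Tendsto (fun δ : ℝ => 36 * Real.exp (-((√δ)⁻¹ / 49)))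
        (nhdsWithin 0 (Ioi 0)) (nhds 0) := by
      have h := (Real.tendsto_exp_neg_atTop_nhds_zero.comp
        ((tendsto_inv_nhdsGT_zero.comp hsqrt).atTop_div_const (by norm_num : (0:ℝ) < 49))).const_mul
        (36:ℝ)
      simpa using h
    have hsmall : ∀ᶠ δ : ℝ in nhdsWithin 0 (Ioi 0), √δ ≤ σ :=
      (hsqrt.mono_right nhdsWithin_le_nhds).eventually_le_const hσ.1
    refine tendsto_of_tendsto_of_tendsto_of_le_of_le' tendsto_const_nhds hlim ?_ ?_
    · filter_upwards [self_mem_nhdsWithin] with δ hδ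
      refine Real.sSup_nonneg ?_
      rintro _ ⟨ξ, hξ, rfl⟩
      exact rhoF_nonneg hδ ⟨hξ.1, by linarith [hξ.2, hσ.1]⟩
    · filter_upwards [self_mem_nhdsWithin, hsmall] with δ hδ hδσ
      refine csSup_le ((nonempty_Icc.2 (by linarith [hσ.2])).image _) ?_
      rintro _ ⟨ξ, hξ, rfl⟩
      exact rhoF_le_exp hσ.2 hδ hδσ hξ
end
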